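/- arXiv:math/9806095 — 2 statements merged into one kernel-verified Lean document; each statement's English description precedes it below -/
import Mathlib

section
/- Let ρ ≥ 0, δ < 1, and a_j ∈ S^{m_j}_{ρ,δ}(ℝ^d×ℝ^d), j = 1,2, with a_j(x,ξ) = 0 for x outside a fixed compact set. Define h(x,ξ) = (2π)^{−d} ∫_{ℝ^d} ( ∫_{ℝ^d} a₁(y,ξ) conj(a₂(y,ξ+ζ)) e^{i⟨x−y,ζ⟩} dy ) dζ as an iterated integral. Then h is a well-defined smooth function, and for all multi-indices α, β there exist n = n(α,β) and C = C(α,β) such that |∂_ξ^α ∂_x^β h(x,ξ)| ≤ C(1+|ξ|)^n for all x, ξ ∈ ℝ^d. -/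
open MeasureTheory Filter Topology

noncomputable section

/-- Dot product on `ℝ^d`. -/
def dotp {d : ℕ} (x ξ : Fin d → ℝ) : ℝ := ∑ i, x i * ξ i

/-- Directional derivative of a function between normed spaces. -/
def dirDeriv {E F : Type*} [NormedAddCommGroup E] [NormedSpace ℝ E]
    [NormedAddCommGroup F] [NormedSpace ℝ F] (v : E) (f : E → F) : E → F :=
  fun x => fderiv ℝ f x v

/-- Iterated directional derivatives along a list of directions. -/
def dirDerivList {E F : Type*} [NormedAddCommGroup E] [NormedSpace ℝ E]
    [NormedAddCommGroup F] [NormedSpace ℝ F] : List E → (E → F) → E → F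
  | [], f => f
  | v :: l, f => dirDeriv v (dirDerivList l f)

/-- Multi-index partial derivative `∂^α` with respect to a family of directions. -/
def mpderivB {n : ℕ} {E F : Type*} [NormedAddCommGroup E] [NormedSpace ℝ E]
    [NormedAddCommGroup F] [NormedSpace ℝ F] (b : Fin n → E) (α : Fin n → ℕ)
    (f : E → F) : E → F :=
  dirDerivList ((List.finRange n).flatMap fun i => List.replicate (α i) (b i)) f

/-- Multi-index partial derivative `∂^α` on `ℝ^d`. -/
def mpderiv {d : ℕ} {F : Type*} [NormedAddCommGroup F] [NormedSpace ℝ F]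
    (α : Fin d → ℕ) (f : (Fin d → ℝ) → F) : (Fin d → ℝ) → F :=
  mpderivB (fun i => Pi.single i 1) α f

/-- Order `|α|` of a multi-index. -/
def mOrder {d : ℕ} (α : Fin d → ℕ) : ℕ := ∑ i, α i

/-- Factorial `α!` of a multi-index. -/
def mFactorial {d : ℕ} (α : Fin d → ℕ) : ℕ := ∏ i, (α i).factorial

/-- Power `ζ^α`. -/
def mpow {d : ℕ} (ζ : Fin d → ℝ) (α : Fin d → ℕ) : ℝ := ∏ i, ζ i ^ α i

/-- The finset of multi-indices of order `< N`. -/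
def mIdxLt (d N : ℕ) : Finset (Fin d → ℕ) :=
  (Fintype.piFinset fun _ : Fin d => Finset.range N).filter fun α => mOrder α < N

/-- The finset of multi-indices of order `= N`. -/
def mIdxEq (d N : ℕ) : Finset (Fin d → ℕ) :=
  (Fintype.piFinset fun _ : Fin d => Finset.range (N + 1)).filter fun α => mOrder α = N

/-- Hörmander symbol class `S^m_{ρ,δ}(X × ℝ^d)`. -/
def IsSymbol {d : ℕ} (X : Set (Fin d → ℝ)) (m ρ δ : ℝ)
    (a : (Fin d → ℝ) → (Fin d → ℝ) → ℂ) : Prop :=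
  ContDiffOn ℝ (⊤ : ℕ∞) (fun q : (Fin d → ℝ) × (Fin d → ℝ) => a q.1 q.2) (X ×ˢ Set.univ) ∧
  ∀ (α β : Fin d → ℕ) (K : Set (Fin d → ℝ)), IsCompact K → K ⊆ X →
    ∃ C : ℝ, ∀ x ∈ K, ∀ ξ : Fin d → ℝ,
      ‖mpderiv β (fun y => mpderiv α (fun η => a y η) ξ) x‖ ≤
        C * (1 + ‖ξ‖) ^ (m - ρ * (mOrder α : ℝ) + δ * (mOrder β : ℝ))

/-- Hörmander amplitude class `S^m_{ρ,δ,δ}(X × X × ℝ^d)`. -/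
def IsAmplitude {d : ℕ} (X : Set (Fin d → ℝ)) (m ρ δ : ℝ)
    (a : (Fin d → ℝ) → (Fin d → ℝ) → (Fin d → ℝ) → ℂ) : Prop :=
  ContDiffOn ℝ (⊤ : ℕ∞)
    (fun q : ((Fin d → ℝ) × (Fin d → ℝ)) × (Fin d → ℝ) => a q.1.1 q.1.2 q.2)
    ((X ×ˢ X) ×ˢ Set.univ) ∧
  ∀ (α β β' : Fin d → ℕ) (K : Set (Fin d → ℝ)), IsCompact K → K ⊆ X →
    ∃ C : ℝ, ∀ x ∈ K, ∀ x' ∈ K, ∀ ξ : Fin d → ℝ,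
      ‖mpderiv β (fun y => mpderiv β' (fun y' => mpderiv α (fun η => a y y' η) ξ) x') x‖ ≤
        C * (1 + ‖ξ‖) ^ (m - ρ * (mOrder α : ℝ) + δ * ((mOrder β : ℝ) + (mOrder β' : ℝ)))

/-- `C₀^∞(X)` test functions. -/
def IsTestFun {d : ℕ} (X : Set (Fin d → ℝ)) (u : (Fin d → ℝ) → ℂ) : Prop :=
  ContDiff ℝ (⊤ : ℕ∞) u ∧ HasCompactSupport u ∧ tsupport u ⊆ X

/-- Fourier transform `(2π)^{-d/2} ∫ e^{-i⟨x,ξ⟩} u(x) dx`. -/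
def fourierHat {d : ℕ} (u : (Fin d → ℝ) → ℂ) (ξ : Fin d → ℝ) : ℂ :=
  (((2 * Real.pi) ^ (-(d : ℝ) / 2) : ℝ) : ℂ) *
    ∫ x : Fin d → ℝ, Complex.exp (-(Complex.I * (dotp x ξ : ℂ))) * u x

/-- Pseudo-differential operator with symbol `a`. -/
def Op {d : ℕ} (a : (Fin d → ℝ) → (Fin d → ℝ) → ℂ) (u : (Fin d → ℝ) → ℂ) :
    (Fin d → ℝ) → ℂ := fun x =>
  (((2 * Real.pi) ^ (-(d : ℝ) / 2) : ℝ) : ℂ) *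
    ∫ ξ : Fin d → ℝ, Complex.exp (Complex.I * (dotp x ξ : ℂ)) * a x ξ * fourierHat u ξ

/-- Pseudo-differential operator with amplitude `a` (iterated integral). -/
def OpAmp {d : ℕ} (a : (Fin d → ℝ) → (Fin d → ℝ) → (Fin d → ℝ) → ℂ)
    (u : (Fin d → ℝ) → ℂ) : (Fin d → ℝ) → ℂ := fun x =>
  (((2 * Real.pi) ^ (-(d : ℝ)) : ℝ) : ℂ) *
    ∫ ξ : Fin d → ℝ, ∫ x' : Fin d → ℝ,
      Complex.exp (Complex.I * (dotp (x - x') ξ : ℂ)) * a x x' ξ * u x'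

/-- The formal adjoint `A*` of the PDO with symbol `a`. -/
def OpAdj {d : ℕ} (a : (Fin d → ℝ) → (Fin d → ℝ) → ℂ) (u : (Fin d → ℝ) → ℂ) :
    (Fin d → ℝ) → ℂ := fun x =>
  (((2 * Real.pi) ^ (-(d : ℝ)) : ℝ) : ℂ) *
    ∫ ξ : Fin d → ℝ, ∫ x' : Fin d → ℝ,
      Complex.exp (Complex.I * (dotp (x - x') ξ : ℂ)) * (starRingEnd ℂ) (a x' ξ) * u x'

/-- Gradient of a real-valued function on `ℝ^d`. -/
def gradR {d : ℕ} (f : (Fin d → ℝ) → ℝ) (x : Fin d → ℝ) : Fin d → ℝ :=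
  fun i => fderiv ℝ f x (Pi.single i 1)

end

abbrev EE (d : ℕ) := Fin d → ℝ

section lists
variable {E F : Type*} [NormedAddCommGroup E] [NormedSpace ℝ E]
    [NormedAddCommGroup F] [NormedSpace ℝ F]

lemma dirDerivList_append (l₁ l₂ : List E) (f : E → F) :
    dirDerivList (l₁ ++ l₂) f = dirDerivList l₁ (dirDerivList l₂ f) := by
  induction l₁ with
  | nil => rfl
  | cons v l ih => simp only [List.cons_append, dirDerivList, ih]

lemma dirDeriv_contDiff {f : E → F} (hf : ContDiff ℝ (⊤ : ℕ∞) f) (v : E) :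
    ContDiff ℝ (⊤ : ℕ∞) (dirDeriv v f) := by
  have := hf.fderiv_right (m := (⊤ : ℕ∞)) (by simp)
  exact this.clm_apply contDiff_const

lemma dirDerivList_contDiff {f : E → F} (hf : ContDiff ℝ (⊤ : ℕ∞) f) (l : List E) :
    ContDiff ℝ (⊤ : ℕ∞) (dirDerivList l f) := by
  induction l with
  | nil => exact hf
  | cons v l ih => exact dirDeriv_contDiff ih v

lemma dirDeriv_comm {f : E → F} (hf : ContDiff ℝ (⊤ : ℕ∞) f) (v w : E) :
    dirDeriv v (dirDeriv w f) = dirDeriv w (dirDeriv v f) := by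
  funext x
  have hd : DifferentiableAt ℝ (fderiv ℝ f) x :=
    ((hf.fderiv_right (m := (⊤ : ℕ∞)) (by simp)).differentiable (by simp)) x
  have hs : IsSymmSndFDerivAt ℝ f x := by
    apply hf.contDiffAt.isSymmSndFDerivAt
    rw [minSmoothness_of_isRCLikeNormedField]
    exact WithTop.coe_le_coe.2 le_top
  have key : ∀ v w : E, dirDeriv v (dirDeriv w f) x = fderiv ℝ (fderiv ℝ f) x v w := by
    intro v w
    have : HasFDerivAt (fun y => fderiv ℝ f y w) _ x := hd.hasFDerivAt.clm_apply (hasFDerivAt_const w x)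
    simp only [dirDeriv]
    change fderiv ℝ (fun y => fderiv ℝ f y w) x v = _
    rw [this.fderiv]; simp
  rw [key, key]; exact hs v w

lemma dirDerivList_perm {f : E → F} (hf : ContDiff ℝ (⊤ : ℕ∞) f) {l₁ l₂ : List E}
    (h : l₁.Perm l₂) : dirDerivList l₁ f = dirDerivList l₂ f := by
  induction h with
  | nil => rfl
  | cons v _ ih => simp only [dirDerivList, ih]
  | swap v w l => exact dirDeriv_comm (dirDerivList_contDiff hf l) _ _
  | trans _ _ h1 h2 => rw [h1, h2]

lemma iteratedFDeriv_eq_list {f : E → F} (hf : ContDiff ℝ (⊤ : ℕ∞) f) (n : ℕ) (v : Fin n → E) (x : E) :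
    iteratedFDeriv ℝ n f x v = dirDerivList (List.ofFn v) f x := by
  induction n generalizing x with
  | zero => simp [dirDerivList]
  | succ n ih =>
    rw [iteratedFDeriv_succ_apply_left, List.ofFn_succ]
    simp only [dirDerivList, dirDeriv]
    have hd : DifferentiableAt ℝ (iteratedFDeriv ℝ n f) x :=
      (hf.differentiable_iteratedFDeriv (by exact_mod_cast WithTop.coe_lt_top _)) x
    have h2 : (dirDerivList (List.ofFn fun i : Fin n => v i.succ) f) =
      fun y => iteratedFDeriv ℝ n f y (Fin.tail v) := by
      funext y; rw [ih]; rfl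
    rw [h2]
    have := ((ContinuousMultilinearMap.apply ℝ (fun _ : Fin n => E) F (Fin.tail v)).hasFDerivAt.comp x hd.hasFDerivAt)
    have h3 := this.fderiv
    change fderiv ℝ (fun y => iteratedFDeriv ℝ n f y (Fin.tail v)) x = _ at h3
    rw [h3]; rfl

end lists

section prod
variable {E E' F : Type*} [NormedAddCommGroup E] [NormedSpace ℝ E]
    [NormedAddCommGroup E'] [NormedSpace ℝ E'] [NormedAddCommGroup F] [NormedSpace ℝ F]

lemma dirDerivList_snd {f : E × E' → F} (hf : ContDiff ℝ (⊤ : ℕ∞) f) (l : List E') (y : E) :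
    dirDerivList l (fun η => f (y, η)) = fun ξ => dirDerivList (l.map fun v => ((0 : E), v)) f (y, ξ) := by
  induction l with
  | nil => rfl
  | cons v l ih =>
    funext ξ
    simp only [dirDerivList, List.map_cons, ih, dirDeriv]
    have hd := ((dirDerivList_contDiff hf (l.map fun v => ((0 : E), v))).differentiable (by simp) (y, ξ)).hasFDerivAt
    have := (hd.comp ξ (hasFDerivAt_prodMk_right y ξ)).fderiv
    simp only [Function.comp_def] at this
    rw [this]; simp

lemma dirDerivList_fst {f : E × E' → F} (hf : ContDiff ℝ (⊤ : ℕ∞) f) (l : List E) (ξ : E') :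
    dirDerivList l (fun y => f (y, ξ)) = fun y => dirDerivList (l.map fun v => (v, (0 : E'))) f (y, ξ) := by
  induction l with
  | nil => rfl
  | cons v l ih =>
    funext y
    simp only [dirDerivList, List.map_cons, ih, dirDeriv]
    have hd := ((dirDerivList_contDiff hf (l.map fun v => (v, (0 : E')))).differentiable (by simp) (y, ξ)).hasFDerivAt
    have := (hd.comp y (hasFDerivAt_prodMk_left (𝕜 := ℝ) y ξ)).fderiv
    simp only [Function.comp_def] at this
    rw [this]; simp
end prod

/-- Coordinate directions in `ℝ^d × ℝ^d`. -/
noncomputable def bv {d : ℕ} : Fin d ⊕ Fin d → EE d × EE d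
  | Sum.inl i => (Pi.single i 1, 0)
  | Sum.inr i => (0, Pi.single i 1)

def canon {d : ℕ} (α β : Fin d → ℕ) : List (Fin d ⊕ Fin d) :=
  ((List.finRange d).flatMap fun i => List.replicate (β i) (Sum.inl i)) ++
  ((List.finRange d).flatMap fun i => List.replicate (α i) (Sum.inr i))

lemma mpderiv_eq {d : ℕ} {f : EE d × EE d → ℂ} (hf : ContDiff ℝ (⊤ : ℕ∞) f) (α β : Fin d → ℕ) (x ξ : EE d) :
    mpderiv β (fun y => mpderiv α (fun η => f (y, η)) ξ) x =
      dirDerivList ((canon α β).map bv) f (x, ξ) := by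
  simp only [mpderiv, mpderivB, canon]
  simp only [dirDerivList_snd hf]
  rw [dirDerivList_fst (dirDerivList_contDiff hf _), ← dirDerivList_append]
  simp [List.map_flatMap, bv]

lemma lawful_sum {d : ℕ} : LawfulBEq (Fin d ⊕ Fin d) where
  rfl := by rintro (i | i) <;> exact beq_self_eq_true i
  eq_of_beq := by
    rintro (i | i) (j | j) h
    · rw [show i = j from eq_of_beq (α := Fin d) h]
    · exact absurd h Bool.false_ne_true
    · exact absurd h Bool.false_ne_true
    · rw [show i = j from eq_of_beq (α := Fin d) h]

lemma sum_finRange_ite {d : ℕ} (i : Fin d) (g : Fin d → ℕ) :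
    ((List.finRange d).map fun x => if x = i then g x else 0).sum = g i := by
  have := List.sum_ofFn (f := fun x => if x = i then g x else 0)
  rw [List.ofFn_eq_map] at this
  rw [this]; simp

lemma perm_canon {d : ℕ} (l : List (Fin d ⊕ Fin d)) :
    l.Perm (canon (fun i => l.count (Sum.inr i)) (fun i => l.count (Sum.inl i))) := by
  have := @lawful_sum d
  rw [List.perm_iff_count]
  rintro (i | i)
  · simp [canon, List.count_flatMap, Function.comp_def, List.count_replicate, sum_finRange_ite]
  · simp [canon, List.count_flatMap, Function.comp_def, List.count_replicate, sum_finRange_ite]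

lemma canon_length {d : ℕ} (α β : Fin d → ℕ) : (canon α β).length = mOrder β + mOrder α := by
  simp only [canon, List.length_append, List.length_flatMap, List.length_replicate, mOrder,
    ← List.ofFn_eq_map, List.sum_ofFn]

lemma multilin_bound {d n : ℕ} (T : ContinuousMultilinearMap ℝ (fun _ : Fin n => EE d × EE d) ℂ) (c : ℝ)
    (hc : 0 ≤ c) (h : ∀ r : Fin n → Fin d ⊕ Fin d, ‖T (fun i => bv (r i))‖ ≤ c) :
    ‖T‖ ≤ (Fintype.card (Fin n → Fin d ⊕ Fin d)) * c := by
  apply ContinuousMultilinearMap.opNorm_le_bound (by positivity)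
  intro v
  let co : EE d × EE d → Fin d ⊕ Fin d → ℝ := fun q s => Sum.elim q.1 q.2 s
  have hco : ∀ q : EE d × EE d, q = ∑ s, co q s • bv s := by
    intro q
    simp only [Fintype.sum_sum_type, co, bv, Sum.elim_inl, Sum.elim_inr]
    ext i
    · simp [Prod.fst_sum, Finset.sum_apply, Pi.single_apply]
    · simp [Prod.snd_sum, Finset.sum_apply, Pi.single_apply]
  have hle : ∀ q s, |co q s| ≤ ‖q‖ := by
    rintro q (s | s)
    · exact (norm_le_pi_norm q.1 s).trans (norm_fst_le q)
    · exact (norm_le_pi_norm q.2 s).trans (norm_snd_le q)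
  have hv : v = fun i => ∑ s, co (v i) s • bv s := by funext i; exact hco _
  have : T v = ∑ r : Fin n → Fin d ⊕ Fin d, (∏ i, co (v i) (r i)) • T (fun i => bv (r i)) := by
    conv_lhs => rw [hv]
    rw [ContinuousMultilinearMap.map_sum]
    simp [ContinuousMultilinearMap.map_smul_univ]
  rw [this]
  calc _ ≤ ∑ r : Fin n → Fin d ⊕ Fin d, (∏ i, ‖v i‖) * c := by
        refine norm_sum_le_of_le _ fun r _ => ?_
        rw [norm_smul, Real.norm_eq_abs, Finset.abs_prod]
        gcongr with i
        · exact hle _ _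
        · exact h r
    _ = _ := by simp; ring

section helpers

lemma symbol_bound {d : ℕ} {m ρ δ : ℝ} (hρ : 0 ≤ ρ) {a : EE d → EE d → ℂ}
    (ha : IsSymbol Set.univ m ρ δ a) {K₀ : Set (EE d)} (hK₀ : IsCompact K₀)
    (hs : ∀ x ∉ K₀, ∀ ξ, a x ξ = 0) (n : ℕ) :
    ∃ C : ℝ, 0 ≤ C ∧ ∀ q : EE d × EE d,
      ‖iteratedFDeriv ℝ n (fun q : EE d × EE d => a q.1 q.2) q‖ ≤
        C * (1 + ‖q.2‖) ^ (max m 0 + max δ 0 * n) := by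
  obtain ⟨hsm, hb⟩ := ha
  have hsm : ContDiff ℝ (⊤ : ℕ∞) (fun q : EE d × EE d => a q.1 q.2) := by
    rw [Set.univ_prod_univ] at hsm
    exact contDiffOn_univ.1 hsm
  choose C hC using fun α β => hb α β K₀ hK₀ (Set.subset_univ _)
  let Cr : (Fin n → Fin d ⊕ Fin d) → ℝ := fun r =>
    |C (fun i => (List.ofFn r).count (Sum.inr i)) (fun i => (List.ofFn r).count (Sum.inl i))|
  have hCr : ∀ r, 0 ≤ Cr r := fun r => abs_nonneg _
  refine ⟨(Fintype.card (Fin n → Fin d ⊕ Fin d)) * ∑ r, Cr r, ?_, ?_⟩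
  · have := Finset.sum_nonneg (s := Finset.univ) (fun r _ => hCr r)
    positivity
  rintro ⟨x, ξ⟩
  have h1 : (1 : ℝ) ≤ 1 + ‖ξ‖ := by simp
  have hsum := Finset.sum_nonneg (s := Finset.univ) (fun r _ => hCr r)
  by_cases hx : x ∈ K₀
  · rw [mul_assoc]
    apply multilin_bound
    · have := Finset.sum_nonneg (s := Finset.univ) (fun r _ => hCr r)
      positivity
    intro r
    rw [iteratedFDeriv_eq_list hsm]
    have e : (List.ofFn fun i => bv (r i)) = (List.ofFn r).map bv := by
      rw [List.map_ofFn]; rfl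
    rw [e, dirDerivList_perm hsm ((perm_canon (List.ofFn r)).map bv), ← mpderiv_eq hsm]
    refine (hC _ _ x hx ξ).trans ?_
    have hlen := (perm_canon (List.ofFn r)).length_eq
    rw [canon_length, List.length_ofFn] at hlen
    set α : Fin d → ℕ := (fun i => (List.ofFn r).count (Sum.inr i))
    set β : Fin d → ℕ := (fun i => (List.ofFn r).count (Sum.inl i))
    have hn : (n : ℝ) = mOrder β + mOrder α := by exact_mod_cast hlen
    apply mul_le_mul
    · exact (le_abs_self _).trans (Finset.single_le_sum (f := Cr) (fun r _ => hCr r) (Finset.mem_univ r))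
    · apply Real.rpow_le_rpow_of_exponent_le h1
      have hA : (0 : ℝ) ≤ mOrder α := by positivity
      have hB : (0 : ℝ) ≤ mOrder β := by positivity
      rw [hn]
      have e1 : 0 ≤ ρ * mOrder α := by positivity
      have e2 : δ * mOrder β ≤ max δ 0 * mOrder β := by gcongr; exact le_max_left _ _
      have e3 : 0 ≤ max δ 0 * mOrder α := by positivity
      have e4 := le_max_left m 0
      linarith
    · positivity
    · exact hsum
  · have : (fun q : EE d × EE d => a q.1 q.2) =ᶠ[𝓝 (x, ξ)] fun _ => 0 := by
      have : {q : EE d × EE d | q.1 ∉ K₀} ∈ 𝓝 (x, ξ) :=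
        (hK₀.isClosed.isOpen_compl.preimage continuous_fst).mem_nhds hx
      filter_upwards [this] with q hq
      exact hs _ hq _
    have h0 := (this.iteratedFDeriv n (𝕜 := ℝ)).eq_of_nhds
    rw [h0]
    have : ‖iteratedFDeriv ℝ n (fun _ : EE d × EE d => (0 : ℂ)) (x, ξ)‖ = 0 := by
      simp [iteratedFDeriv_fun_zero]
    rw [this]; positivity

structure Cls {d : ℕ} (K : Set (EE d)) (δ A : ℝ) (f : EE d → EE d × EE d → ℂ) : Prop where
  smooth : ContDiff ℝ (⊤ : ℕ∞) (fun p : EE d × (EE d × EE d) => f p.1 p.2)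
  supp : ∀ ζ q, q.1 ∉ K → f ζ q = 0
  bound : ∀ n : ℕ, ∃ C : ℝ, ∃ M : ℕ, 0 ≤ C ∧ ∀ (ζ : EE d) (q : EE d × EE d),
    ‖iteratedFDeriv ℝ n (f ζ) q‖ ≤ C * (1 + ‖q.2‖) ^ M * (1 + ‖ζ‖) ^ (A + δ * n)

variable {d : ℕ} {K : Set (EE d)} {δ A : ℝ} {f : EE d → EE d × EE d → ℂ}

lemma Cls.smooth1 (hf : Cls K δ A f) (ζ : EE d) : ContDiff ℝ (⊤ : ℕ∞) (f ζ) :=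
  hf.smooth.comp (contDiff_const.prodMk contDiff_id)

lemma Cls.fderiv_dir (hK : IsClosed K) (hf : Cls K δ A f) (v : EE d × EE d) :
    Cls K δ (A + δ) (fun ζ q => fderiv ℝ (f ζ) q v) where
  smooth := by
    have h : ContDiff ℝ (⊤ : ℕ∞) (Function.uncurry fun p : EE d × (EE d × EE d) => f p.1) :=
      hf.smooth.comp (contDiff_fst.fst.prodMk contDiff_snd)
    exact h.fderiv_apply contDiff_snd contDiff_const (by simp)
  supp := by
    intro ζ q hq
    have : f ζ =ᶠ[𝓝 q] fun _ => 0 := by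
      have : {q : EE d × EE d | q.1 ∉ K} ∈ 𝓝 q :=
        (hK.isOpen_compl.preimage continuous_fst).mem_nhds hq
      filter_upwards [this] with q hq
      exact hf.supp _ _ hq
    rw [this.fderiv_eq]; simp
  bound := by
    intro n
    obtain ⟨C, M, hC, h⟩ := hf.bound (n + 1)
    refine ⟨‖v‖ * C, M, by positivity, fun ζ q => ?_⟩
    have h1 : ContDiff ℝ (⊤ : ℕ∞) (fderiv ℝ (f ζ)) := (hf.smooth1 ζ).fderiv_right (by simp)
    refine (norm_iteratedFDeriv_clm_apply_const (N := (⊤ : ℕ∞)) h1.contDiffAt (WithTop.coe_le_coe.2 le_top)).trans ?_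
    rw [norm_iteratedFDeriv_fderiv]
    have := h ζ q
    have e : A + δ * ((n + 1 : ℕ) : ℝ) = A + δ + δ * n := by push_cast; ring
    rw [e] at this
    rw [mul_assoc, mul_assoc]
    gcongr
    rw [← mul_assoc]; exact this

lemma Cls.mulζ (hf : Cls K δ A f) (j : Fin d) :
    Cls K δ (A + 1) (fun ζ q => (Complex.I * (ζ j : ℂ)) * f ζ q) where
  smooth := by
    have : ContDiff ℝ (⊤ : ℕ∞) (fun p : EE d × (EE d × EE d) => (p.1 j : ℂ)) := by
      apply Complex.ofRealCLM.contDiff.comp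
      exact (ContinuousLinearMap.proj (R := ℝ) (φ := fun _ : Fin d => ℝ) j).contDiff.comp contDiff_fst
    exact (contDiff_const.mul this).mul hf.smooth
  supp := by intro ζ q hq; simp [hf.supp ζ q hq]
  bound := by
    intro n
    obtain ⟨C, M, hC, h⟩ := hf.bound n
    refine ⟨C, M, by positivity, fun ζ q => ?_⟩
    have h1 := iteratedFDeriv_const_smul_apply' (𝕜 := ℝ) (i := n) (a := Complex.I * (ζ j : ℂ))
      (((hf.smooth1 ζ).contDiffAt (x := q)).of_le (WithTop.coe_le_coe.2 le_top))
    simp only [smul_eq_mul] at h1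
    rw [h1, norm_smul]
    have h2 : ‖Complex.I * (ζ j : ℂ)‖ ≤ 1 + ‖ζ‖ := by
      simp only [norm_mul, Complex.norm_I, one_mul, Complex.norm_real]
      exact (norm_le_pi_norm ζ j).trans (by linarith)
    have e : (1 + ‖ζ‖) ^ (A + 1 + δ * n) = (1 + ‖ζ‖) * (1 + ‖ζ‖) ^ (A + δ * n) := by
      rw [show A + 1 + δ * n = 1 + (A + δ * n) by ring, Real.rpow_add (by positivity), Real.rpow_one]
    calc _ ≤ (1 + ‖ζ‖) * (C * (1 + ‖q.2‖) ^ M * (1 + ‖ζ‖) ^ (A + δ * n)) := by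
          gcongr; exact h ζ q
      _ = _ := by rw [e]; ring


lemma one_add_le_mul {d : ℕ} (ξ ζ : EE d) : 1 + ‖ξ + ζ‖ ≤ (1 + ‖ξ‖) * (1 + ‖ζ‖) := by
  have := norm_add_le ξ ζ
  have : 0 ≤ ‖ξ‖ * ‖ζ‖ := by positivity
  nlinarith

lemma cls_base {ρ δ m₁ m₂ : ℝ} (hρ : 0 ≤ ρ) {a₁ a₂ : EE d → EE d → ℂ}
    (ha₁ : IsSymbol Set.univ m₁ ρ δ a₁) (ha₂ : IsSymbol Set.univ m₂ ρ δ a₂) (hK : IsCompact K)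
    (hs₁ : ∀ x ∉ K, ∀ ξ, a₁ x ξ = 0) (hs₂ : ∀ x ∉ K, ∀ ξ, a₂ x ξ = 0) :
    Cls K (max δ 0) (max m₂ 0)
      (fun ζ q => a₁ q.1 q.2 * (starRingEnd ℂ) (a₂ q.1 (q.2 + ζ))) := by
  have sm₁ : ContDiff ℝ (⊤ : ℕ∞) (fun q : EE d × EE d => a₁ q.1 q.2) := by
    have := ha₁.1; rw [Set.univ_prod_univ] at this
    exact contDiffOn_univ.1 this
  have sm₂ : ContDiff ℝ (⊤ : ℕ∞) (fun q : EE d × EE d => a₂ q.1 q.2) := by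
    have := ha₂.1; rw [Set.univ_prod_univ] at this
    exact contDiffOn_univ.1 this
  have smc : ContDiff ℝ (⊤ : ℕ∞) (fun q : EE d × EE d => (starRingEnd ℂ) (a₂ q.1 q.2)) :=
    Complex.conjCLE.contDiff.comp sm₂
  refine ⟨?_, ?_, ?_⟩
  · apply ContDiff.mul
    · exact sm₁.comp contDiff_snd
    · exact smc.comp (contDiff_snd.fst.prodMk (contDiff_snd.snd.add contDiff_fst))
  · intro ζ q hq
    simp [hs₁ _ hq]
  · intro n
    choose C₁ hC₁ hb₁ using symbol_bound hρ ha₁ hK hs₁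
    choose C₂ hC₂ hb₂ using symbol_bound hρ ha₂ hK hs₂
    set δ' := max δ 0
    have hδ' : 0 ≤ δ' := le_max_right _ _
    have hm₁ : 0 ≤ max m₁ 0 := le_max_right _ _
    have hm₂ : 0 ≤ max m₂ 0 := le_max_right _ _
    let M : ℕ := ⌈(max m₁ 0 + δ' * n) + (max m₂ 0 + δ' * n)⌉₊
    refine ⟨∑ i ∈ Finset.range (n + 1), (n.choose i : ℝ) * C₁ i * C₂ (n - i), M, ?_, ?_⟩
    · exact Finset.sum_nonneg fun i _ => mul_nonneg (mul_nonneg (by positivity) (hC₁ _)) (hC₂ _)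
    intro ζ q
    have sh : ∀ k, ‖iteratedFDeriv ℝ k (fun q : EE d × EE d => (starRingEnd ℂ) (a₂ q.1 (q.2 + ζ))) q‖
        ≤ C₂ k * (1 + ‖q.2 + ζ‖) ^ (max m₂ 0 + δ' * k) := by
      intro k
      have e := iteratedFDeriv_comp_add_right (𝕜 := ℝ) (f := fun q : EE d × EE d => (starRingEnd ℂ) (a₂ q.1 q.2)) k (0, ζ) q
      simp only [Prod.fst_add, Prod.snd_add, add_zero] at e
      rw [e]
      have e2 := Complex.conjLIE.norm_iteratedFDeriv_comp_left (fun q : EE d × EE d => a₂ q.1 q.2) (q + (0, ζ)) k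
      change ‖iteratedFDeriv ℝ k (fun q : EE d × EE d => (starRingEnd ℂ) (a₂ q.1 q.2)) (q + (0, ζ))‖ = _ at e2
      rw [e2]
      exact hb₂ k (q + (0, ζ))
    have smz : ContDiff ℝ (⊤ : ℕ∞) (fun q : EE d × EE d => (starRingEnd ℂ) (a₂ q.1 (q.2 + ζ))) :=
      smc.comp (contDiff_fst.prodMk (contDiff_snd.add contDiff_const))
    refine (norm_iteratedFDeriv_mul_le sm₁ smz q (n := n) (WithTop.coe_le_coe.2 le_top)).trans ?_
    rw [Finset.sum_mul, Finset.sum_mul]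
    refine Finset.sum_le_sum fun i hi => ?_
    have hin : i ≤ n := by simpa [Nat.lt_succ_iff] using hi
    have hinr : (i : ℝ) ≤ n := by exact_mod_cast hin
    have hinr' : ((n - i : ℕ) : ℝ) ≤ n := by exact_mod_cast Nat.sub_le _ _
    have h1 : (1 : ℝ) ≤ 1 + ‖q.2‖ := by simp
    have h2 : (1 : ℝ) ≤ 1 + ‖ζ‖ := by simp
    have b1 : (1 + ‖q.2‖) ^ (max m₁ 0 + δ' * i) ≤ (1 + ‖q.2‖) ^ (max m₁ 0 + δ' * n) := by
      apply Real.rpow_le_rpow_of_exponent_le h1; gcongr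
    have b2 : (1 + ‖q.2 + ζ‖) ^ (max m₂ 0 + δ' * (n - i : ℕ)) ≤
        (1 + ‖q.2‖) ^ (max m₂ 0 + δ' * n) * (1 + ‖ζ‖) ^ (max m₂ 0 + δ' * n) := by
      rw [← Real.mul_rpow (by positivity) (by positivity)]
      have h3 : (1 : ℝ) ≤ 1 + ‖q.2 + ζ‖ := by simp
      refine (Real.rpow_le_rpow_of_exponent_le h3 (y := max m₂ 0 + δ' * (n - i : ℕ)) (z := max m₂ 0 + δ' * n) (by gcongr)).trans ?_
      apply Real.rpow_le_rpow (by positivity) (one_add_le_mul _ _) (by positivity)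
    have b3 : (1 + ‖q.2‖) ^ (max m₁ 0 + δ' * n) * (1 + ‖q.2‖) ^ (max m₂ 0 + δ' * n) ≤ (1 + ‖q.2‖) ^ M := by
      rw [← Real.rpow_add (by positivity), ← Real.rpow_natCast]
      exact Real.rpow_le_rpow_of_exponent_le h1 (Nat.le_ceil _)
    have c1 := hC₁ i
    have c2 := hC₂ (n - i)
    calc _ ≤ (n.choose i : ℝ) * (C₁ i * (1 + ‖q.2‖) ^ (max m₁ 0 + δ' * n)) *
          (C₂ (n - i) * ((1 + ‖q.2‖) ^ (max m₂ 0 + δ' * n) * (1 + ‖ζ‖) ^ (max m₂ 0 + δ' * n))) := by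
          gcongr
          · exact (hb₁ i q).trans (by gcongr)
          · exact (sh _).trans (by gcongr)
      _ = (n.choose i : ℝ) * C₁ i * C₂ (n - i) * (((1 + ‖q.2‖) ^ (max m₁ 0 + δ' * n) * (1 + ‖q.2‖) ^ (max m₂ 0 + δ' * n)) * (1 + ‖ζ‖) ^ (max m₂ 0 + δ' * n)) := by ring
      _ ≤ (n.choose i : ℝ) * C₁ i * C₂ (n - i) * ((1 + ‖q.2‖) ^ M * (1 + ‖ζ‖) ^ (max m₂ 0 + δ' * n)) := by gcongr
      _ = _ := by ring


lemma hasFDerivAt_param {H ι : Type*} [NormedAddCommGroup H] [NormedSpace ℝ H] [Fintype ι]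
    (p : ι → H →L[ℝ] ℝ) (F : H → EE d → ℂ) (G : ι → H → EE d → ℂ) (x₀ : H) (bound : ι → EE d → ℝ)
    (hF : ∀ x, Continuous (F x)) (hint : Integrable (F x₀)) (hG : ∀ i, Continuous (G i x₀))
    (hb : ∀ i, ∀ x ∈ Metric.ball x₀ 1, ∀ a, ‖G i x a‖ ≤ bound i a)
    (hbi : ∀ i, Integrable (bound i))
    (hd : ∀ a x, HasFDerivAt (fun x => F x a) (∑ i, (p i).smulRight (G i x a)) x) :
    HasFDerivAt (fun x => ∫ a, F x a) (∑ i, (p i).smulRight (∫ a, G i x₀ a)) x₀ := by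
  have hGi : ∀ i, Integrable (G i x₀) := fun i =>
    (hbi i).mono' (hG i).aestronglyMeasurable
      (Eventually.of_forall fun a => hb i x₀ (Metric.mem_ball_self one_pos) a)
  let L : ι → ℂ →L[ℝ] (H →L[ℝ] ℂ) := fun i => ContinuousLinearMap.smulRightL ℝ H ℂ (p i)
  have hL : ∀ i c, (p i).smulRight c = L i c := fun i c => rfl
  have key := hasFDerivAt_integral_of_dominated_of_fderiv_le (μ := volume) (𝕜 := ℝ)
    (F := F) (F' := fun x a => ∑ i, (p i).smulRight (G i x a)) (x₀ := x₀)
    (bound := fun a => ∑ i, ‖p i‖ * bound i a) (Metric.ball_mem_nhds x₀ one_pos)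
    (Eventually.of_forall fun x => (hF x).aestronglyMeasurable) hint
    (by
      apply Continuous.aestronglyMeasurable
      simp only [hL]
      exact continuous_finsetSum _ fun i _ => (L i).continuous.comp (hG i))
    (Eventually.of_forall fun a x hx => by
      refine norm_sum_le_of_le _ fun i _ => ?_
      rw [ContinuousLinearMap.norm_smulRight_apply]
      gcongr
      exact hb i x hx a)
    (integrable_finsetSum _ fun i _ => (hbi i).const_mul _)
    (Eventually.of_forall fun a x _ => hd a x)
  have e : (∫ a, ∑ i, (p i).smulRight (G i x₀ a)) = ∑ i, (p i).smulRight (∫ a, G i x₀ a) := by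
    rw [integral_finsetSum]
    · refine Finset.sum_congr rfl fun i _ => ?_
      simp only [hL]
      exact (L i).integral_comp_comm (hGi i)
    · intro i _
      simp only [hL]
      exact (L i).integrable_comp (hGi i)
  rwa [e] at key

/-- The inner integral. -/
noncomputable def Bint (f : EE d → EE d × EE d → ℂ) (ζ ξ : EE d) : ℂ :=
  ∫ y : EE d, f ζ (y, ξ) * Complex.exp (-(Complex.I * (dotp y ζ : ℂ)))

lemma norm_cexp_I (t : ℝ) : ‖Complex.exp (Complex.I * (t : ℂ))‖ = 1 := by
  rw [mul_comm]; exact Complex.norm_exp_ofReal_mul_I t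

lemma norm_cexp_negI (t : ℝ) : ‖Complex.exp (-(Complex.I * (t : ℂ)))‖ = 1 := by
  have := norm_cexp_I (-t)
  simpa using this

lemma dotp_continuous : Continuous (fun p : EE d × EE d => dotp p.1 p.2) := by
  unfold dotp; fun_prop

lemma Cls.cont (hf : Cls K δ A f) : Continuous (fun p : EE d × (EE d × EE d) => f p.1 p.2) :=
  hf.smooth.continuous

lemma Cls.integrand_cont (hf : Cls K δ A f) :
    Continuous (fun p : (EE d × EE d) × EE d =>
      f p.1.1 (p.2, p.1.2) * Complex.exp (-(Complex.I * (dotp p.2 p.1.1 : ℂ)))) := by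
  have h1 : Continuous (fun p : (EE d × EE d) × EE d => f p.1.1 (p.2, p.1.2)) :=
    hf.cont.comp (continuous_fst.fst.prodMk (continuous_snd.prodMk continuous_fst.snd))
  have h2 : Continuous (fun p : (EE d × EE d) × EE d => dotp p.2 p.1.1) :=
    dotp_continuous.comp (continuous_snd.prodMk continuous_fst.fst)
  exact h1.mul (Complex.continuous_exp.comp
    ((continuous_const.mul (Complex.continuous_ofReal.comp h2)).neg))

lemma Bint_eq (hf : Cls K δ A f) (ζ ξ : EE d) :
    Bint f ζ ξ = ∫ y in K, f ζ (y, ξ) * Complex.exp (-(Complex.I * (dotp y ζ : ℂ))) := by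
  rw [setIntegral_eq_integral_of_forall_compl_eq_zero]; · rfl
  intro y hy
  rw [hf.supp ζ (y, ξ) hy, zero_mul]

lemma Bint_cont (hK : IsCompact K) (hf : Cls K δ A f) :
    Continuous (fun p : EE d × EE d => Bint f p.1 p.2) := by
  have := continuous_parametric_integral_of_continuous (μ := (volume : Measure (EE d)))
    (f := fun (p : EE d × EE d) y => f p.1 (y, p.2) * Complex.exp (-(Complex.I * (dotp y p.1 : ℂ))))
    hf.integrand_cont hK
  refine this.congr fun p => ?_
  rw [Bint_eq hf]

lemma Cls.bound0 (hf : Cls K δ A f) : ∃ C : ℝ, ∃ M : ℕ, 0 ≤ C ∧ ∀ (ζ : EE d) (q : EE d × EE d),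
    ‖f ζ q‖ ≤ C * (1 + ‖q.2‖) ^ M * (1 + ‖ζ‖) ^ A := by
  obtain ⟨C, M, hC, h⟩ := hf.bound 0
  refine ⟨C, M, hC, fun ζ q => ?_⟩
  simpa using h ζ q

lemma Bint_bound0 (hK : IsCompact K) (hf : Cls K δ A f) :
    ∃ C : ℝ, ∃ M : ℕ, 0 ≤ C ∧ ∀ ζ ξ : EE d,
    ‖Bint f ζ ξ‖ ≤ C * (1 + ‖ξ‖) ^ M * (1 + ‖ζ‖) ^ A := by
  obtain ⟨C, M, hC, h⟩ := hf.bound0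
  refine ⟨C * volume.real K, M, by positivity, fun ζ ξ => ?_⟩
  rw [Bint_eq hf]
  refine (norm_setIntegral_le_of_norm_le_const (C := C * (1 + ‖ξ‖) ^ M * (1 + ‖ζ‖) ^ A) hK.measure_lt_top ?_).trans ?_
  · intro y _
    rw [norm_mul, norm_cexp_negI, mul_one]
    exact h ζ (y, ξ)
  · apply le_of_eq; ring

lemma Cls.integrable (hK : IsCompact K) (hf : Cls K δ A f) (ζ ξ : EE d) :
    Integrable (fun y => f ζ (y, ξ) * Complex.exp (-(Complex.I * (dotp y ζ : ℂ)))) := by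
  apply Continuous.integrable_of_hasCompactSupport
  · exact hf.integrand_cont.comp (continuous_const (y := (ζ, ξ)) |>.prodMk continuous_id)
  · apply HasCompactSupport.intro hK
    intro y hy
    rw [hf.supp ζ (y, ξ) hy, zero_mul]

lemma dotp_hasFDerivAt (ζ x : EE d) :
    HasFDerivAt (fun x : EE d => (dotp x ζ : ℂ))
      (∑ j, (ContinuousLinearMap.proj (R := ℝ) (φ := fun _ : Fin d => ℝ) j).smulRight (ζ j : ℂ)) x := by
  have : (fun x : EE d => (dotp x ζ : ℂ)) =
    fun x => (∑ j, (ContinuousLinearMap.proj (R := ℝ) (φ := fun _ : Fin d => ℝ) j).smulRight (ζ j : ℂ)) x := by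
    funext x; simp [dotp]
  rw [this]
  exact ContinuousLinearMap.hasFDerivAt _

lemma Bint_parts (hK : IsCompact K) (hf : Cls K δ A f) (j : Fin d) (ζ ξ : EE d) :
    (ζ j : ℂ) * Bint f ζ ξ = -Complex.I * Bint (fun ζ q => fderiv ℝ (f ζ) q (bv (Sum.inl j))) ζ ξ := by
  have hD := hf.fderiv_dir hK.isClosed (bv (Sum.inl j))
  set g : EE d → ℂ := fun y => Complex.exp (-(Complex.I * (dotp y ζ : ℂ))) with hg
  have hg' : ∀ y, HasFDerivAt g _ y := fun y =>
    (((dotp_hasFDerivAt ζ y).const_mul Complex.I).neg).cexp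
  have hgv : ∀ y, fderiv ℝ g y (Pi.single j 1) = -(Complex.I * (ζ j : ℂ)) * g y := by
    intro y
    rw [(hg' y).fderiv]
    simp [hg, Pi.single_apply]
    ring
  have hfd : ∀ y, HasFDerivAt (fun y => f ζ (y, ξ)) _ y := fun y =>
    (((hf.smooth1 ζ).differentiable (by simp) (y, ξ)).hasFDerivAt).comp y (hasFDerivAt_prodMk_left (𝕜 := ℝ) y ξ)
  have hfv : ∀ y, fderiv ℝ (fun y => f ζ (y, ξ)) y (Pi.single j 1) = fderiv ℝ (f ζ) (y, ξ) (bv (Sum.inl j)) := by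
    intro y
    rw [(hfd y).fderiv]; simp [bv]
  have hi := hf.integrable hK ζ ξ
  have key := integral_mul_fderiv_eq_neg_fderiv_mul_of_integrable (μ := volume) (f := fun y => f ζ (y, ξ)) (g := g)
    (v := Pi.single j 1) (by simp only [hfv]; exact hD.integrable hK ζ ξ)
    (by
      simp only [hgv]
      refine (hi.const_mul (-(Complex.I * (ζ j : ℂ)))).congr (Eventually.of_forall fun y => ?_)
      simp only [hg]; ring)
    hi (fun y _ => (hfd y).differentiableAt) (fun y _ => (hg' y).differentiableAt)
  simp only [hfv, hgv] at key
  have e : (∫ y, f ζ (y, ξ) * (-(Complex.I * (ζ j : ℂ)) * g y)) = -(Complex.I * (ζ j : ℂ)) * Bint f ζ ξ := by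
    rw [Bint, ← integral_const_mul]
    congr 1; funext y; simp only [hg]; ring
  rw [e] at key
  have : Complex.I * Complex.I = -1 := Complex.I_mul_I
  change _ = - Bint (fun ζ q => fderiv ℝ (f ζ) q (bv (Sum.inl j))) ζ ξ at key
  linear_combination (Complex.I) * key + (ζ j : ℂ) * Bint f ζ ξ * this

lemma Bint_pow (hK : IsCompact K) (j : Fin d) (k : ℕ) {A : ℝ} {f : EE d → EE d × EE d → ℂ} (hf : Cls K δ A f) :
    ∃ C : ℝ, ∃ M : ℕ, 0 ≤ C ∧ ∀ ζ ξ : EE d,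
    |ζ j| ^ k * ‖Bint f ζ ξ‖ ≤ C * (1 + ‖ξ‖) ^ M * (1 + ‖ζ‖) ^ (A + δ * k) := by
  induction k generalizing f A with
  | zero => simpa using Bint_bound0 hK hf
  | succ k ih =>
    obtain ⟨C, M, hC, h⟩ := ih (hf.fderiv_dir hK.isClosed (bv (Sum.inl j)))
    refine ⟨C, M, hC, fun ζ ξ => ?_⟩
    have e : ‖(ζ j : ℂ) * Bint f ζ ξ‖ = ‖Bint (fun ζ q => fderiv ℝ (f ζ) q (bv (Sum.inl j))) ζ ξ‖ := by
      rw [Bint_parts hK hf]; simp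
    rw [norm_mul, Complex.norm_real, Real.norm_eq_abs] at e
    rw [pow_succ, mul_assoc, e]
    convert h ζ ξ using 2
    push_cast; ring_nf

lemma Bint_decay (hK : IsCompact K) (hδ0 : 0 ≤ δ) (hδ : δ < 1) (hf : Cls K δ A f) (N : ℝ) :
    ∃ C : ℝ, ∃ M : ℕ, 0 ≤ C ∧ ∀ ζ ξ : EE d,
    ‖Bint f ζ ξ‖ ≤ C * (1 + ‖ξ‖) ^ M * (1 + ‖ζ‖) ^ (-N) := by
  obtain ⟨k, hk⟩ := exists_nat_ge ((A + N) / (1 - δ))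
  have hk' : A + δ * k - k ≤ -N := by
    rw [div_le_iff₀ (by linarith)] at hk; nlinarith
  obtain ⟨C₀, M₀, hC₀, h₀⟩ := Bint_bound0 hK hf
  choose C M hC h using fun j => Bint_pow hK j k hf
  refine ⟨2 ^ k * (C₀ + ∑ j, C j), M₀ + ∑ j, M j, ?_, fun ζ ξ => ?_⟩
  · have := Finset.sum_nonneg (s := Finset.univ) (fun j _ => hC j); positivity
  have h1 : (1 : ℝ) ≤ 1 + ‖ξ‖ := by simp
  have h2 : (1 : ℝ) ≤ 1 + ‖ζ‖ := by simp
  have hz : ‖ζ‖ ^ k ≤ 1 + ∑ j, |ζ j| ^ k := by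
    have hs : 0 ≤ ∑ j, |ζ j| ^ k := Finset.sum_nonneg fun j _ => by positivity
    rcases isEmpty_or_nonempty (Fin d) with he | he
    · have : ‖ζ‖ = 0 := by rw [norm_eq_zero]; exact Subsingleton.elim _ _
      rw [this]
      have : (0 : ℝ) ^ k ≤ 1 := pow_le_one₀ le_rfl zero_le_one
      linarith
    · obtain ⟨j, hj⟩ := Finite.exists_max (fun j => ‖ζ j‖)
      have : ‖ζ‖ ≤ ‖ζ j‖ := (pi_norm_le_iff_of_nonneg (norm_nonneg _)).2 hj
      have h3 : ‖ζ‖ ^ k ≤ |ζ j| ^ k := by gcongr; exact this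
      have := Finset.single_le_sum (f := fun j => |ζ j| ^ k) (fun j _ => by positivity) (Finset.mem_univ j)
      linarith
  have hz2 : (1 + ‖ζ‖) ^ k ≤ 2 ^ k * (1 + ∑ j, |ζ j| ^ k) := by
    rcases le_total 1 ‖ζ‖ with h | h
    · calc (1 + ‖ζ‖) ^ k ≤ (2 * ‖ζ‖) ^ k := by gcongr; linarith
        _ = 2 ^ k * ‖ζ‖ ^ k := mul_pow _ _ _
        _ ≤ _ := by gcongr
    · calc (1 + ‖ζ‖) ^ k ≤ 2 ^ k := by gcongr; linarith
        _ ≤ _ := by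
          apply le_mul_of_one_le_right (by positivity)
          have hs : 0 ≤ ∑ j, |ζ j| ^ k := Finset.sum_nonneg fun j _ => by positivity
          linarith
  set W := (1 + ‖ξ‖) ^ (M₀ + ∑ j, M j) * (1 + ‖ζ‖) ^ (A + δ * k) with hW
  have f0 : ‖Bint f ζ ξ‖ ≤ C₀ * W := by
    refine (h₀ ζ ξ).trans ?_
    rw [mul_assoc, hW]
    gcongr
    · omega
    · nlinarith [(Nat.cast_nonneg k : (0 : ℝ) ≤ k)]
  have fj : ∀ j, |ζ j| ^ k * ‖Bint f ζ ξ‖ ≤ C j * W := by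
    intro j
    refine (h j ζ ξ).trans ?_
    rw [mul_assoc, hW]
    have := hC j
    gcongr
    · have := Finset.single_le_sum (f := M) (fun j _ => Nat.zero_le _) (Finset.mem_univ j)
      omega
  have tot : (1 + ‖ζ‖) ^ k * ‖Bint f ζ ξ‖ ≤ 2 ^ k * (C₀ + ∑ j, C j) * W := by
    calc _ ≤ (2 ^ k * (1 + ∑ j, |ζ j| ^ k)) * ‖Bint f ζ ξ‖ := by gcongr
      _ = 2 ^ k * (‖Bint f ζ ξ‖ + ∑ j, |ζ j| ^ k * ‖Bint f ζ ξ‖) := by rw [← Finset.sum_mul]; ring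
      _ ≤ 2 ^ k * (C₀ * W + ∑ j, C j * W) := mul_le_mul_of_nonneg_left (add_le_add f0 (Finset.sum_le_sum fun j _ => fj j)) (by positivity)
      _ = _ := by rw [← Finset.sum_mul]; ring
  have hp : 0 < (1 + ‖ζ‖) ^ k := by positivity
  have hCs := Finset.sum_nonneg (s := Finset.univ) (fun j _ => hC j)
  calc ‖Bint f ζ ξ‖ ≤ (2 ^ k * (C₀ + ∑ j, C j) * W) / (1 + ‖ζ‖) ^ k := by
        rw [le_div_iff₀ hp]; linarith
    _ = 2 ^ k * (C₀ + ∑ j, C j) * (1 + ‖ξ‖) ^ (M₀ + ∑ j, M j) * (1 + ‖ζ‖) ^ (A + δ * k - k) := by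
        rw [Real.rpow_sub (by positivity), Real.rpow_natCast, hW]; ring
    _ ≤ _ := by gcongr


lemma Bint_hasFDerivAt (hK : IsCompact K) (hf : Cls K δ A f) (ζ ξ : EE d) :
    HasFDerivAt (fun ξ => Bint f ζ ξ)
      (∑ j, (ContinuousLinearMap.proj (R := ℝ) (φ := fun _ : Fin d => ℝ) j).smulRight
        (Bint (fun ζ q => fderiv ℝ (f ζ) q (bv (Sum.inr j))) ζ ξ)) ξ := by
  have hD := fun j : Fin d => hf.fderiv_dir hK.isClosed (bv (Sum.inr j))
  choose C M hC hb using fun j => (hD j).bound0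
  let c : Fin d → ℝ := fun j => C j * (1 + (‖ξ‖ + 1)) ^ (M j) * (1 + ‖ζ‖) ^ (A + δ)
  have hc : ∀ j, 0 ≤ c j := fun j => by have := hC j; positivity
  refine hasFDerivAt_param _ (fun ξ y => f ζ (y, ξ) * Complex.exp (-(Complex.I * (dotp y ζ : ℂ))))
    (fun j ξ y => fderiv ℝ (f ζ) (y, ξ) (bv (Sum.inr j)) * Complex.exp (-(Complex.I * (dotp y ζ : ℂ)))) ξ
    (fun j => K.indicator fun _ => c j) ?_ (hf.integrable hK ζ ξ) ?_ ?_ ?_ ?_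
  · intro x
    exact hf.integrand_cont.comp ((continuous_const (y := (ζ, x))).prodMk continuous_id)
  · intro j
    exact (hD j).integrand_cont.comp ((continuous_const (y := (ζ, ξ))).prodMk continuous_id)
  · intro j x hx y
    by_cases hy : y ∈ K
    · rw [Set.indicator_of_mem hy, norm_mul, norm_cexp_negI, mul_one]
      refine (hb j ζ (y, x)).trans ?_
      have hx' : ‖x‖ ≤ ‖ξ‖ + 1 := by
        have := norm_le_norm_add_norm_sub' x ξ
        have h2 : ‖x - ξ‖ < 1 := by simpa [dist_eq_norm] using hx
        linarith
      have := hC j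
      simp only [c]
      gcongr
    · rw [Set.indicator_of_notMem hy, (hD j).supp ζ (y, x) hy]; simp
  · intro j
    rw [integrable_indicator_iff hK.isClosed.measurableSet]
    exact integrableOn_const hK.measure_lt_top.ne
  · intro y x
    have h1 := (((hf.smooth1 ζ).differentiable (by simp) (y, x)).hasFDerivAt).comp x (hasFDerivAt_prodMk_right (𝕜 := ℝ) y x)
    have h2 := h1.mul_const (Complex.exp (-(Complex.I * (dotp y ζ : ℂ))))
    refine h2.congr_fderiv ?_
    ext v
    have hv : v = ∑ j, v j • (Pi.single j (1 : ℝ) : EE d) := by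
      ext i; simp [Finset.sum_apply, Pi.single_apply]
    have hv2 : ((0 : EE d), v) = ∑ j, v j • (bv (Sum.inr j) : EE d × EE d) := by
      have := congrArg (ContinuousLinearMap.inr ℝ (EE d) (EE d)) hv
      simpa [bv] using this
    simp only [ContinuousLinearMap.sum_apply, ContinuousLinearMap.smulRight_apply,
      ContinuousLinearMap.proj_apply, ContinuousLinearMap.smul_apply,
      ContinuousLinearMap.comp_apply, ContinuousLinearMap.inr_apply, smul_eq_mul]
    rw [hv2, map_sum]
    simp only [map_smul, Finset.smul_sum, Complex.real_smul, Finset.mul_sum]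
    refine Finset.sum_congr rfl fun j _ => ?_
    ring

/-- Transformation of the family under a coordinate derivative of `Hint`. -/
noncomputable def nxt (f : EE d → EE d × EE d → ℂ) : Fin d ⊕ Fin d → EE d → EE d × EE d → ℂ
  | Sum.inl j => fun ζ q => (Complex.I * (ζ j : ℂ)) * f ζ q
  | Sum.inr j => fun ζ q => fderiv ℝ (f ζ) q (bv (Sum.inr j))

noncomputable def Hint (f : EE d → EE d × EE d → ℂ) (q : EE d × EE d) : ℂ :=
  ∫ ζ : EE d, Complex.exp (Complex.I * (dotp q.1 ζ : ℂ)) * Bint f ζ q.2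

noncomputable def prj : Fin d ⊕ Fin d → (EE d × EE d →L[ℝ] ℝ)
  | Sum.inl j => (ContinuousLinearMap.proj (R := ℝ) (φ := fun _ : Fin d => ℝ) j).comp
      (ContinuousLinearMap.fst ℝ (EE d) (EE d))
  | Sum.inr j => (ContinuousLinearMap.proj (R := ℝ) (φ := fun _ : Fin d => ℝ) j).comp
      (ContinuousLinearMap.snd ℝ (EE d) (EE d))

lemma prj_bv (s t : Fin d ⊕ Fin d) : prj s (bv t) = if s = t then (1 : ℝ) else 0 := by
  rcases s with s | s <;> rcases t with t | t <;> simp [prj, bv, Pi.single_apply]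

lemma Cls.nxt (hK : IsCompact K) (hf : Cls K δ A f) (s : Fin d ⊕ Fin d) : ∃ A', Cls K δ A' (nxt f s) := by
  rcases s with j | j
  · exact ⟨_, hf.mulζ j⟩
  · exact ⟨_, hf.fderiv_dir hK.isClosed _⟩

lemma Hint_integrand_cont (hK : IsCompact K) (hf : Cls K δ A f) (q : EE d × EE d) :
    Continuous (fun ζ => Complex.exp (Complex.I * (dotp q.1 ζ : ℂ)) * Bint f ζ q.2) := by
  have h1 : Continuous (fun ζ => dotp q.1 ζ) := dotp_continuous.comp (continuous_const.prodMk continuous_id)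
  have h2 : Continuous (fun ζ => Bint f ζ q.2) := (Bint_cont hK hf).comp (continuous_id.prodMk continuous_const)
  exact (Complex.continuous_exp.comp (continuous_const.mul (Complex.continuous_ofReal.comp h1))).mul h2

lemma int_decay : Integrable (fun ζ : EE d => (1 + ‖ζ‖) ^ (-((d : ℝ) + 1))) :=
  integrable_one_add_norm (by simp)

lemma Hint_bound (hK : IsCompact K) (hδ0 : 0 ≤ δ) (hδ : δ < 1) (hf : Cls K δ A f) :
    ∃ C : ℝ, ∃ M : ℕ, ∀ q : EE d × EE d, ‖Hint f q‖ ≤ C * (1 + ‖q.2‖) ^ M := by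
  obtain ⟨C, M, hC, h⟩ := Bint_decay hK hδ0 hδ hf ((d : ℝ) + 1)
  refine ⟨C * ∫ ζ : EE d, (1 + ‖ζ‖) ^ (-((d : ℝ) + 1)), M, fun q => ?_⟩
  refine (norm_integral_le_of_norm_le (int_decay.const_mul (C * (1 + ‖q.2‖) ^ M))
    (Eventually.of_forall fun ζ => ?_)).trans ?_
  · rw [norm_mul, norm_cexp_I, one_mul]; exact h ζ q.2
  · rw [integral_const_mul]; apply le_of_eq; ring

lemma Hint_hasFDerivAt (hK : IsCompact K) (hδ0 : 0 ≤ δ) (hδ : δ < 1) (hf : Cls K δ A f)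
    (q : EE d × EE d) :
    HasFDerivAt (Hint f) (∑ s, (prj s).smulRight (Hint (nxt f s) q)) q := by
  choose A' hn using hf.nxt hK
  choose C M hC hb using fun s => Bint_decay hK hδ0 hδ (hn s) ((d : ℝ) + 1)
  refine hasFDerivAt_param prj (fun q ζ => Complex.exp (Complex.I * (dotp q.1 ζ : ℂ)) * Bint f ζ q.2)
    (fun s q ζ => Complex.exp (Complex.I * (dotp q.1 ζ : ℂ)) * Bint (nxt f s) ζ q.2) q
    (fun s ζ => C s * (1 + (‖q.2‖ + 1)) ^ (M s) * (1 + ‖ζ‖) ^ (-((d : ℝ) + 1)))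
    (fun q => Hint_integrand_cont hK hf q) ?_ (fun s => Hint_integrand_cont hK (hn s) q) ?_
    (fun s => int_decay.const_mul _) ?_
  · obtain ⟨C, M, hC, h⟩ := Bint_decay hK hδ0 hδ hf ((d : ℝ) + 1)
    refine (int_decay.const_mul (C * (1 + ‖q.2‖) ^ M)).mono'
      (Hint_integrand_cont hK hf q).aestronglyMeasurable (Eventually.of_forall fun ζ => ?_)
    rw [norm_mul, norm_cexp_I, one_mul]; exact h ζ q.2
  · intro s x hx ζ
    rw [norm_mul, norm_cexp_I, one_mul]
    refine (hb s ζ x.2).trans ?_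
    have hx' : ‖x.2‖ ≤ ‖q.2‖ + 1 := by
      have := norm_le_norm_add_norm_sub' x.2 q.2
      have h2 : ‖x - q‖ < 1 := by simpa [dist_eq_norm] using hx
      have h3 : ‖x.2 - q.2‖ ≤ ‖x - q‖ := norm_snd_le (x - q)
      linarith
    have := hC s
    gcongr
  · intro ζ q
    have h1 := (((dotp_hasFDerivAt ζ q.1).const_mul Complex.I).cexp).comp q (hasFDerivAt_fst (𝕜 := ℝ) (p := q))
    have h2 := (Bint_hasFDerivAt hK hf ζ q.2).comp q (hasFDerivAt_snd (𝕜 := ℝ) (p := q))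
    have h3 := h1.mul h2
    refine h3.congr_fderiv ?_
    have e : ∀ j : Fin d, Bint (nxt f (Sum.inl j)) ζ q.2 = Complex.I * (ζ j : ℂ) * Bint f ζ q.2 := by
      intro j
      simp only [Bint, nxt]
      rw [← integral_const_mul]
      congr 1; funext y; ring
    refine ContinuousLinearMap.ext fun v => ?_
    simp only [Fintype.sum_sum_type, e]
    simp only [nxt, prj, ContinuousLinearMap.add_apply, ContinuousLinearMap.sum_apply,
      ContinuousLinearMap.smulRight_apply, ContinuousLinearMap.smul_apply, ContinuousLinearMap.comp_apply,
      ContinuousLinearMap.proj_apply, ContinuousLinearMap.coe_fst', ContinuousLinearMap.coe_snd',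
      smul_eq_mul, Complex.real_smul, Function.comp_apply, Finset.mul_sum]
    rw [add_comm]
    congr 1 <;> (refine Finset.sum_congr rfl fun j _ => ?_; ring)

lemma Hint_contDiff (hK : IsCompact K) (hδ0 : 0 ≤ δ) (hδ : δ < 1) (hf : Cls K δ A f) :
    ContDiff ℝ (⊤ : ℕ∞) (Hint f) := by
  have key : ∀ n : ℕ, ∀ (A : ℝ) (f : EE d → EE d × EE d → ℂ), Cls K δ A f → ContDiff ℝ n (Hint f) := by
    intro n
    induction n with
    | zero =>
      intro A f hf
      rw [Nat.cast_zero, contDiff_zero]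
      exact continuous_iff_continuousAt.2 fun q => (Hint_hasFDerivAt hK hδ0 hδ hf q).continuousAt
    | succ n ih =>
      intro A f hf
      rw [Nat.cast_succ, contDiff_succ_iff_fderiv]
      refine ⟨fun q => (Hint_hasFDerivAt hK hδ0 hδ hf q).differentiableAt, by simp, ?_⟩
      have : fderiv ℝ (Hint f) = fun q => ∑ s, (prj s).smulRight (Hint (nxt f s) q) :=
        funext fun q => (Hint_hasFDerivAt hK hδ0 hδ hf q).fderiv
      rw [this]
      refine ContDiff.sum fun s _ => ?_
      obtain ⟨A', h'⟩ := hf.nxt hK s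
      exact (ContinuousLinearMap.smulRightL ℝ (EE d × EE d) ℂ (prj s)).contDiff.comp (ih A' _ h')
  exact contDiff_infty.2 fun n => key n A f hf

lemma Hint_list (hK : IsCompact K) (hδ0 : 0 ≤ δ) (hδ : δ < 1) (hf : Cls K δ A f)
    (l : List (Fin d ⊕ Fin d)) :
    ∃ A' g, Cls K δ A' g ∧ dirDerivList (l.map bv) (Hint f) = Hint g := by
  induction l with
  | nil => exact ⟨A, f, hf, rfl⟩
  | cons s l ih =>
    obtain ⟨A', g, hg, e⟩ := ih
    obtain ⟨A'', h''⟩ := hg.nxt hK s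
    refine ⟨A'', _, h'', ?_⟩
    funext q
    simp only [List.map_cons, dirDerivList, e, dirDeriv]
    rw [(Hint_hasFDerivAt hK hδ0 hδ hg q).fderiv]
    rcases s with j | j <;> simp [prj_bv]

end helpers

/-- Lemma 2.7 / `ha1`: the function
`h(x,ξ) = (2π)^{-d} ∫∫ a₁(y,ξ) conj(a₂(y,ξ+ζ)) e^{i⟨x-y,ζ⟩} dy dζ` is smooth and all its
derivatives are polynomially bounded in `ξ`, uniformly in `x`. -/
theorem statement6 {d : ℕ} (ρ δ m₁ m₂ : ℝ) (hρ : 0 ≤ ρ) (hδ : δ < 1)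
    (a₁ a₂ : (Fin d → ℝ) → (Fin d → ℝ) → ℂ)
    (ha₁ : IsSymbol Set.univ m₁ ρ δ a₁)
    (ha₂ : IsSymbol Set.univ m₂ ρ δ a₂)
    (K₀ : Set (Fin d → ℝ)) (hK₀ : IsCompact K₀)
    (hsupp : ∀ x ∉ K₀, ∀ ξ : Fin d → ℝ, a₁ x ξ = 0 ∧ a₂ x ξ = 0)
    (h : (Fin d → ℝ) → (Fin d → ℝ) → ℂ)
    (hh : h = fun x ξ => (((2 * Real.pi) ^ (-(d : ℝ)) : ℝ) : ℂ) *
      ∫ ζ : Fin d → ℝ, ∫ y : Fin d → ℝ,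
        a₁ y ξ * (starRingEnd ℂ) (a₂ y (ξ + ζ)) *
          Complex.exp (Complex.I * (dotp (x - y) ζ : ℂ))) :
    ContDiff ℝ (⊤ : ℕ∞) (fun q : (Fin d → ℝ) × (Fin d → ℝ) => h q.1 q.2) ∧
    ∀ α β : Fin d → ℕ, ∃ n C : ℝ, ∀ x ξ : Fin d → ℝ,
      ‖mpderiv β (fun y => mpderiv α (fun η => h y η) ξ) x‖ ≤ C * (1 + ‖ξ‖) ^ n := by
  have hδ0 : 0 ≤ max δ 0 := le_max_right _ _
  have hδ1 : max δ 0 < 1 := max_lt hδ one_pos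
  have hb := cls_base hρ ha₁ ha₂ hK₀ (fun x hx ξ => (hsupp x hx ξ).1) (fun x hx ξ => (hsupp x hx ξ).2)
  set c : ℂ := (((2 * Real.pi) ^ (-(d : ℝ)) : ℝ) : ℂ) with hc
  set b : EE d → EE d × EE d → ℂ := fun ζ q => a₁ q.1 q.2 * (starRingEnd ℂ) (a₂ q.1 (q.2 + ζ)) with hbdef
  have hcb : Cls K₀ (max δ 0) (max m₂ 0) (fun ζ q => c * b ζ q) := by
    refine ⟨contDiff_const.mul hb.smooth, fun ζ q hq => by rw [hb.supp ζ q hq, mul_zero], fun n => ?_⟩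
    obtain ⟨C, M, hC, h⟩ := hb.bound n
    refine ⟨‖c‖ * C, M, by positivity, fun ζ q => ?_⟩
    have h1 := iteratedFDeriv_const_smul_apply' (𝕜 := ℝ) (i := n) (a := c)
      (((hb.smooth1 ζ).contDiffAt (x := q)).of_le (WithTop.coe_le_coe.2 le_top))
    simp only [smul_eq_mul] at h1
    rw [h1, norm_smul, mul_assoc, mul_assoc]
    gcongr
    rw [← mul_assoc]; exact h ζ q
  have hH : (fun q : EE d × EE d => h q.1 q.2) = Hint (fun ζ q => c * b ζ q) := by
    funext q
    rw [hh]
    simp only [Hint, Bint]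
    rw [← integral_const_mul]
    congr 1; funext ζ
    rw [← integral_const_mul, ← integral_const_mul]
    congr 1; funext y
    have e : Complex.exp (Complex.I * (dotp (q.1 - y) ζ : ℂ)) =
        Complex.exp (Complex.I * (dotp q.1 ζ : ℂ)) * Complex.exp (-(Complex.I * (dotp y ζ : ℂ))) := by
      rw [← Complex.exp_add]
      congr 1
      have : dotp (q.1 - y) ζ = dotp q.1 ζ - dotp y ζ := by
        simp [dotp, sub_mul, Finset.sum_sub_distrib]
      rw [this]; push_cast; ring
    rw [e]; simp only [hbdef]; ring
  have hsm := Hint_contDiff hK₀ hδ0 hδ1 hcb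
  rw [← hH] at hsm
  refine ⟨hsm, fun α β => ?_⟩
  obtain ⟨A', g, hg, e⟩ := Hint_list hK₀ hδ0 hδ1 hcb (canon α β)
  obtain ⟨C, M, hCM⟩ := Hint_bound hK₀ hδ0 hδ1 hg
  refine ⟨M, C, fun x ξ => ?_⟩
  have := mpderiv_eq hsm α β x ξ
  simp only at this
  rw [this, hH, e, Real.rpow_natCast]
  exact hCM (x, ξ)
end

section
/- Let r ∈ [0,1), m₁, m₂ ∈ ℝ, m = m₁+m₂. Let Φ ∈ S^r(ℝ^d×ℝ^d) be real-valued, b_j ∈ S^{m_j}(ℝ^d×ℝ^d), and a_j(x,ξ) = e^{iΦ(x,ξ)} b_j(x,ξ), with a_j(x,ξ) = 0 for x outside a fixed compact set, j = 1,2. For a multi-index α and t ∈ [0,1] set v_α(ξ,ζ;t) = ζ^α ∫_{ℝ^d} a₁(y,ξ) conj((∂_ξ^α a₂)(y,ξ+tζ)) e^{−i⟨y,ζ⟩} dy. Then there is C such that |v_α(ξ,ζ;t)| ≤ C(1+|ξ|)^{m−|α|(1−r)} whenever |ζ| ≤ |ξ|/2, uniformly in t ∈ [0,1]; and for every n there is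 C_n such that |v_α(ξ,ζ;t)| ≤ C_n(1+|ζ|)^{−n} whenever |ζ| ≥ |ξ|/2, uniformly in t ∈ [0,1]. -/
open MeasureTheory Filter Topology

open scoped ContDiff

namespace S7

abbrev V (d : ℕ) := Fin d → ℝ

section general
variable {E F : Type*} [NormedAddCommGroup E] [NormedSpace ℝ E]
    [NormedAddCommGroup F] [NormedSpace ℝ F]

lemma smooth_dirDeriv (v : E) {f : E → F} (hf : ContDiff ℝ ∞ f) :
    ContDiff ℝ ∞ (dirDeriv v f) := by
  unfold dirDeriv
  exact (hf.fderiv_right (m := ∞) (by simp)).clm_apply contDiff_const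

lemma smooth_list (l : List E) {f : E → F} (hf : ContDiff ℝ ∞ f) :
    ContDiff ℝ ∞ (dirDerivList l f) := by
  induction l with
  | nil => exact hf
  | cons v l ih => exact smooth_dirDeriv v ih

lemma sdiff {f : E → F} (hf : ContDiff ℝ ∞ f) : Differentiable ℝ f :=
  hf.differentiable (by simp)

lemma dirDeriv_comm (v w : E) {f : E → F} (hf : ContDiff ℝ ∞ f) :
    dirDeriv v (dirDeriv w f) = dirDeriv w (dirDeriv v f) := by
  have hd : Differentiable ℝ (fderiv ℝ f) := sdiff (hf.fderiv_right (m := ∞) (by simp))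
  have key : ∀ a b : E, ∀ x, dirDeriv a (dirDeriv b f) x = fderiv ℝ (fderiv ℝ f) x a b := by
    intro a b x
    unfold dirDeriv
    rw [fderiv_clm_apply (hd x) (differentiableAt_const _)]
    simp
  funext x
  rw [key, key]
  have : IsSymmSndFDerivAt ℝ f x :=
    hf.contDiffAt.isSymmSndFDerivAt (by simp; exact WithTop.coe_le_coe.2 (le_top : (2 : ℕ∞) ≤ ⊤))
  exact this.eq v w

lemma list_perm {l l' : List E} (h : l.Perm l') {f : E → F} (hf : ContDiff ℝ ∞ f) :
    dirDerivList l f = dirDerivList l' f := by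
  induction h with
  | nil => rfl
  | cons x _ ih => simp only [dirDerivList, ih]
  | swap x y l => simp only [dirDerivList]; exact dirDeriv_comm _ _ (smooth_list l hf)
  | trans _ _ h1 h2 => exact h1.trans h2

lemma list_append (l l' : List E) (f : E → F) :
    dirDerivList (l ++ l') f = dirDerivList l (dirDerivList l' f) := by
  induction l with
  | nil => rfl
  | cons v l ih => simp only [List.cons_append, dirDerivList, ih]

lemma dirDeriv_slice_left {A : E × E → F} (hA : ContDiff ℝ ∞ A) (v y η : E) :
    dirDeriv v (fun y => A (y, η)) y = dirDeriv (v, 0) A (y, η) := by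
  unfold dirDeriv
  have h : HasFDerivAt (fun y : E => (y, η)) (ContinuousLinearMap.inl ℝ E E) y :=
    hasFDerivAt_prodMk_left y η
  have := ((sdiff hA (y, η)).hasFDerivAt.comp y h).fderiv
  have h2 : (fun y => A (y, η)) = A ∘ fun y => (y, η) := rfl
  rw [h2, this]; simp

lemma dirDeriv_slice_right {A : E × E → F} (hA : ContDiff ℝ ∞ A) (v y η : E) :
    dirDeriv v (fun η => A (y, η)) η = dirDeriv (0, v) A (y, η) := by
  unfold dirDeriv
  have h : HasFDerivAt (fun η : E => (y, η)) (ContinuousLinearMap.inr ℝ E E) η :=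
    hasFDerivAt_prodMk_right y η
  have := ((sdiff hA (y, η)).hasFDerivAt.comp η h).fderiv
  have h2 : (fun η => A (y, η)) = A ∘ fun η => (y, η) := rfl
  rw [h2, this]; simp

lemma list_slice_left {A : E × E → F} (hA : ContDiff ℝ ∞ A) (l : List E) (η : E) :
    dirDerivList l (fun y => A (y, η)) =
      fun y => dirDerivList (l.map fun v => (v, (0 : E))) A (y, η) := by
  induction l with
  | nil => rfl
  | cons v l ih =>
    funext y
    simp only [dirDerivList, List.map_cons, ih]
    exact dirDeriv_slice_left (smooth_list _ hA) v y η

lemma list_slice_right {A : E × E → F} (hA : ContDiff ℝ ∞ A) (l : List E) (y : E) :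
    dirDerivList l (fun η => A (y, η)) =
      fun η => dirDerivList (l.map fun v => ((0 : E), v)) A (y, η) := by
  induction l with
  | nil => rfl
  | cons v l ih =>
    funext η
    simp only [dirDerivList, List.map_cons, ih]
    exact dirDeriv_slice_right (smooth_list _ hA) v y η

lemma dirDeriv_mul (v : E) {f g : E → ℂ} (hf : ContDiff ℝ ∞ f) (hg : ContDiff ℝ ∞ g) :
    dirDeriv v (fun x => f x * g x) = fun x => f x * dirDeriv v g x + dirDeriv v f x * g x := by
  funext x
  unfold dirDeriv
  rw [fderiv_fun_mul (sdiff hf x) (sdiff hg x)]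
  simp [mul_comm]

lemma dirDeriv_add (v : E) {f g : E → ℂ} (hf : ContDiff ℝ ∞ f) (hg : ContDiff ℝ ∞ g) :
    dirDeriv v (fun x => f x + g x) = fun x => dirDeriv v f x + dirDeriv v g x := by
  funext x
  unfold dirDeriv
  rw [fderiv_fun_add (sdiff hf x) (sdiff hg x)]
  simp

lemma dirDeriv_sub (v : E) {f g : E → ℂ} (hf : ContDiff ℝ ∞ f) (hg : ContDiff ℝ ∞ g) :
    dirDeriv v (fun x => f x - g x) = fun x => dirDeriv v f x - dirDeriv v g x := by
  funext x
  unfold dirDeriv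
  rw [fderiv_fun_sub (sdiff hf x) (sdiff hg x)]
  simp

lemma dirDeriv_const_mul (v : E) (c : ℂ) {f : E → ℂ} (hf : ContDiff ℝ ∞ f) :
    dirDeriv v (fun x => c * f x) = fun x => c * dirDeriv v f x := by
  funext x
  unfold dirDeriv
  rw [fderiv_const_mul (sdiff hf x)]
  simp

lemma smooth_conj {f : E → ℂ} (hf : ContDiff ℝ ∞ f) :
    ContDiff ℝ ∞ (fun x => (starRingEnd ℂ) (f x)) :=
  Complex.conjCLE.contDiff.comp hf

lemma dirDeriv_conj (v : E) {f : E → ℂ} (hf : ContDiff ℝ ∞ f) :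
    dirDeriv v (fun x => (starRingEnd ℂ) (f x)) = fun x => (starRingEnd ℂ) (dirDeriv v f x) := by
  funext x
  unfold dirDeriv
  have := (Complex.conjCLE.hasFDerivAt.comp x (sdiff hf x).hasFDerivAt).fderiv
  have h2 : (fun x => (starRingEnd ℂ) (f x)) = Complex.conjCLE ∘ f := rfl
  rw [h2, this]; simp

lemma smooth_exp {f : E → ℂ} (hf : ContDiff ℝ ∞ f) :
    ContDiff ℝ ∞ (fun x => Complex.exp (Complex.I * f x)) :=
  (contDiff_const.mul hf).cexp

lemma dirDeriv_exp (v : E) {f : E → ℂ} (hf : ContDiff ℝ ∞ f) :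
    dirDeriv v (fun x => Complex.exp (Complex.I * f x)) =
      fun x => Complex.exp (Complex.I * f x) * (Complex.I * dirDeriv v f x) := by
  funext x
  unfold dirDeriv
  have h : HasFDerivAt (fun x => Complex.I * f x) (Complex.I • fderiv ℝ f x) x :=
    (sdiff hf x).hasFDerivAt.const_mul _
  rw [h.cexp.fderiv]; simp

lemma dirDeriv_exp_mul (v : E) {f g : E → ℂ} (hf : ContDiff ℝ ∞ f) (hg : ContDiff ℝ ∞ g) :
    dirDeriv v (fun x => Complex.exp (Complex.I * f x) * g x) =
      fun x => Complex.exp (Complex.I * f x) *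
        ((Complex.I * dirDeriv v f x) * g x + dirDeriv v g x) := by
  rw [dirDeriv_mul v (smooth_exp hf) hg, dirDeriv_exp v hf]
  funext x; ring

end general

/-- Families (indexed by `p`) of smooth functions whose derivatives along `e` up to order `k`
are bounded by `w p` on `K`. -/
def Bd {P E : Type*} [NormedAddCommGroup E] [NormedSpace ℝ E] (K : Set E) (e : E) :
    ℕ → (P → ℝ) → (P → E → ℂ) → Prop
  | 0, w, f => (∀ p, ContDiff ℝ ∞ (f p)) ∧ ∃ C : ℝ, ∀ p, ∀ y ∈ K, ‖f p y‖ ≤ C * w p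
  | k + 1, w, f => ((∀ p, ContDiff ℝ ∞ (f p)) ∧ ∃ C : ℝ, ∀ p, ∀ y ∈ K, ‖f p y‖ ≤ C * w p) ∧
      Bd K e k w (fun p => dirDeriv e (f p))

section bd
variable {P E : Type*} [NormedAddCommGroup E] [NormedSpace ℝ E] {K : Set E} {e : E}

lemma Bd.zero {k : ℕ} {w : P → ℝ} {f : P → E → ℂ} (h : Bd K e k w f) : Bd K e 0 w f := by
  cases k with
  | zero => exact h
  | succ k => exact h.1

lemma Bd.pred {k : ℕ} {w : P → ℝ} {f : P → E → ℂ} (h : Bd K e (k + 1) w f) : Bd K e k w f := by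
  induction k generalizing f with
  | zero => exact h.1
  | succ k ih => exact ⟨h.1, ih h.2⟩

lemma Bd.add {k : ℕ} {w : P → ℝ} {f g : P → E → ℂ} (hf : Bd K e k w f) (hg : Bd K e k w g) :
    Bd K e k w (fun p y => f p y + g p y) := by
  have base : ∀ f g : P → E → ℂ, Bd K e 0 w f → Bd K e 0 w g →
      Bd K e 0 w (fun p y => f p y + g p y) := by
    rintro f g ⟨hf, C, hC⟩ ⟨hg, D, hD⟩
    refine ⟨fun p => (hf p).add (hg p), C + D, fun p y hy => ?_⟩
    have := norm_add_le (f p y) (g p y)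
    linarith [hC p y hy, hD p y hy]
  induction k generalizing f g with
  | zero => exact base f g hf hg
  | succ k ih =>
    refine ⟨base f g hf.1 hg.1, ?_⟩
    have := ih hf.2 hg.2
    convert this using 2 with p
    exact dirDeriv_add e (hf.1.1 p) (hg.1.1 p)

lemma Bd.const_mul {k : ℕ} {w : P → ℝ} {f : P → E → ℂ} (c : ℂ) (hf : Bd K e k w f) :
    Bd K e k w (fun p y => c * f p y) := by
  have base : ∀ f : P → E → ℂ, Bd K e 0 w f → Bd K e 0 w (fun p y => c * f p y) := by
    rintro f ⟨hf, C, hC⟩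
    refine ⟨fun p => contDiff_const.mul (hf p), ‖c‖ * C, fun p y hy => ?_⟩
    rw [norm_mul, mul_assoc]
    exact mul_le_mul_of_nonneg_left (hC p y hy) (norm_nonneg _)
  induction k generalizing f with
  | zero => exact base f hf
  | succ k ih =>
    refine ⟨base f hf.1, ?_⟩
    have := ih hf.2
    convert this using 2 with p
    exact dirDeriv_const_mul e c (hf.1.1 p)

lemma Bd.conj {k : ℕ} {w : P → ℝ} {f : P → E → ℂ} (hf : Bd K e k w f) :
    Bd K e k w (fun p y => (starRingEnd ℂ) (f p y)) := by
  have base : ∀ f : P → E → ℂ, Bd K e 0 w f → Bd K e 0 w (fun p y => (starRingEnd ℂ) (f p y)) := by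
    rintro f ⟨hf, C, hC⟩
    refine ⟨fun p => smooth_conj (hf p), C, fun p y hy => ?_⟩
    simpa using hC p y hy
  induction k generalizing f with
  | zero => exact base f hf
  | succ k ih =>
    refine ⟨base f hf.1, ?_⟩
    have := ih hf.2
    convert this using 2 with p
    exact dirDeriv_conj e (hf.1.1 p)

lemma Bd.mono {k : ℕ} {w w' : P → ℝ} {f : P → E → ℂ} (hf : Bd K e k w f)
    (hw : ∀ p, 0 ≤ w p) (c : ℝ) (h : ∀ p, w p ≤ c * w' p) : Bd K e k w' f := by
  have base : ∀ f : P → E → ℂ, Bd K e 0 w f → Bd K e 0 w' f := by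
    rintro f ⟨hf, C, hC⟩
    refine ⟨hf, |C| * c, fun p y hy => (hC p y hy).trans ?_⟩
    rw [mul_assoc]
    exact (mul_le_mul_of_nonneg_right (le_abs_self C) (hw p)).trans
      (mul_le_mul_of_nonneg_left (h p) (abs_nonneg C))
  induction k generalizing f with
  | zero => exact base f hf
  | succ k ih => exact ⟨base f hf.1, ih hf.2⟩

lemma Bd.mul {k : ℕ} {w w' : P → ℝ} {f g : P → E → ℂ} (hf : Bd K e k w f) (hg : Bd K e k w' g)
    (hw : ∀ p, 0 ≤ w p) : Bd K e k (fun p => w p * w' p) (fun p y => f p y * g p y) := by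
  have base : ∀ f g : P → E → ℂ, Bd K e 0 w f → Bd K e 0 w' g →
      Bd K e 0 (fun p => w p * w' p) (fun p y => f p y * g p y) := by
    rintro f g ⟨hf, C, hC⟩ ⟨hg, D, hD⟩
    refine ⟨fun p => (hf p).mul (hg p), |C| * D, fun p y hy => ?_⟩
    rw [norm_mul]
    have h1 : ‖f p y‖ ≤ |C| * w p :=
      (hC p y hy).trans (mul_le_mul_of_nonneg_right (le_abs_self C) (hw p))
    calc ‖f p y‖ * ‖g p y‖ ≤ (|C| * w p) * (D * w' p) :=
          mul_le_mul h1 (hD p y hy) (norm_nonneg _) (mul_nonneg (abs_nonneg _) (hw p))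
      _ = _ := by ring
  induction k generalizing f g with
  | zero => exact base f g hf hg
  | succ k ih =>
    refine ⟨base f g hf.1 hg.1, ?_⟩
    have := (ih hf.pred hg.2).add (ih hf.2 hg.pred)
    convert this using 2 with p
    exact dirDeriv_mul e (hf.1.1 p) (hg.1.1 p)

/-- all orders -/
def BdI (K : Set E) (e : E) (w : P → ℝ) (f : P → E → ℂ) : Prop := ∀ k, Bd K e k w f

/-- iterate derivative of exp(Iψ) g -/
lemma osc_deriv {w u : P → ℝ} {ψ g : P → E → ℂ} (hψs : ∀ p, ContDiff ℝ ∞ (ψ p))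
    (hψ : BdI K e u (fun p => dirDeriv e (ψ p))) (hg : BdI K e w g)
    (hw : ∀ p, 0 ≤ w p) (hu : ∀ p, 0 ≤ u p) (N : ℕ) :
    ∃ G : P → E → ℂ, BdI K e (fun p => w p * (1 + u p) ^ N) G ∧
      ∀ p, dirDerivList (List.replicate N e) (fun y => Complex.exp (Complex.I * ψ p y) * g p y) =
        fun y => Complex.exp (Complex.I * ψ p y) * G p y := by
  induction N with
  | zero => exact ⟨g, by simpa using hg, fun p => rfl⟩
  | succ N ih =>
    obtain ⟨G, hG, hd⟩ := ih
    have hw' : ∀ p, 0 ≤ w p * (1 + u p) ^ N := fun p => by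
      have := hu p; have := hw p; positivity
    refine ⟨fun p y => (Complex.I * dirDeriv e (ψ p) y) * G p y + dirDeriv e (G p) y, ?_, ?_⟩
    · intro k
      refine Bd.add ?_ ?_
      · refine (((hψ k).const_mul Complex.I).mul (hG k) hu).mono
          (fun p => mul_nonneg (hu p) (hw' p)) 1 (fun p => ?_)
        rw [pow_succ]; nlinarith [hw' p, hu p]
      · refine (hG (k + 1)).2.mono hw' 1 (fun p => ?_)
        rw [pow_succ]; nlinarith [mul_nonneg (hw' p) (hu p)]
    · intro p
      rw [List.replicate_succ]
      simp only [dirDerivList]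
      rw [hd p]
      exact dirDeriv_exp_mul e (hψs p) ((hG 0).1 p)

end bd

/-- basis directions in the product space -/
def dir {d : ℕ} : Fin d ⊕ Fin d → V d × V d
  | Sum.inl i => (Pi.single i 1, 0)
  | Sum.inr i => (0, Pi.single i 1)

def wt {d : ℕ} : Fin d ⊕ Fin d → ℝ
  | Sum.inl _ => 0
  | Sum.inr _ => 1

def Sy0 {d : ℕ} (K : Set (V d)) (m : ℝ) (a : V d × V d → ℂ) : Prop :=
  ContDiff ℝ ∞ a ∧ ∃ C : ℝ, ∀ y ∈ K, ∀ η, ‖a (y, η)‖ ≤ C * (1 + ‖η‖) ^ m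

def Sy {d : ℕ} (K : Set (V d)) : ℕ → ℝ → (V d × V d → ℂ) → Prop
  | 0, m, a => Sy0 K m a
  | k + 1, m, a => Sy0 K m a ∧ ∀ s, Sy K k (m - wt s) (dirDeriv (dir s) a)

section sy
variable {d : ℕ} {K : Set (V d)}

lemma br_pos (η : V d) : 0 < 1 + ‖η‖ := by positivity
lemma br_one (η : V d) : 1 ≤ 1 + ‖η‖ := by simp

lemma Sy0.mono {m m' : ℝ} {a : V d × V d → ℂ} (h : Sy0 K m a) (hm : m ≤ m') : Sy0 K m' a := by
  obtain ⟨h, C, hC⟩ := h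
  refine ⟨h, |C|, fun y hy η => (hC y hy η).trans ?_⟩
  exact mul_le_mul (le_abs_self C) (Real.rpow_le_rpow_of_exponent_le (br_one η) hm)
    (Real.rpow_nonneg (br_pos η).le _) (abs_nonneg _)

lemma Sy0.add {m : ℝ} {f g : V d × V d → ℂ} (hf : Sy0 K m f) (hg : Sy0 K m g) :
    Sy0 K m (fun q => f q + g q) := by
  obtain ⟨hf, C, hC⟩ := hf
  obtain ⟨hg, D, hD⟩ := hg
  refine ⟨hf.add hg, C + D, fun y hy η => (norm_add_le _ _).trans ?_⟩
  linarith [hC y hy η, hD y hy η]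

lemma Sy0.mul {m m' : ℝ} {f g : V d × V d → ℂ} (hf : Sy0 K m f) (hg : Sy0 K m' g) :
    Sy0 K (m + m') (fun q => f q * g q) := by
  obtain ⟨hf, C, hC⟩ := hf
  obtain ⟨hg, D, hD⟩ := hg
  refine ⟨hf.mul hg, C * D, fun y hy η => ?_⟩
  rw [norm_mul, Real.rpow_add (br_pos η)]
  calc _ ≤ (C * (1 + ‖η‖) ^ m) * (D * (1 + ‖η‖) ^ m') :=
        mul_le_mul (hC y hy η) (hD y hy η) (norm_nonneg _) ((norm_nonneg _).trans (hC y hy η))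
    _ = _ := by ring

lemma Sy0.const_mul {m : ℝ} {f : V d × V d → ℂ} (c : ℂ) (hf : Sy0 K m f) :
    Sy0 K m (fun q => c * f q) := by
  obtain ⟨hf, C, hC⟩ := hf
  refine ⟨contDiff_const.mul hf, ‖c‖ * C, fun y hy η => ?_⟩
  rw [norm_mul, mul_assoc]
  exact mul_le_mul_of_nonneg_left (hC y hy η) (norm_nonneg _)

lemma Sy.zero {k : ℕ} {m : ℝ} {f : V d × V d → ℂ} (h : Sy K k m f) : Sy0 K m f := by
  cases k with
  | zero => exact h
  | succ k => exact h.1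

lemma Sy.pred {k : ℕ} {m : ℝ} {f : V d × V d → ℂ} (h : Sy K (k + 1) m f) : Sy K k m f := by
  induction k generalizing f m with
  | zero => exact h.1
  | succ k ih => exact ⟨h.1, fun s => ih (h.2 s)⟩

lemma Sy.mono {k : ℕ} {m m' : ℝ} {f : V d × V d → ℂ} (h : Sy K k m f) (hm : m ≤ m') :
    Sy K k m' f := by
  induction k generalizing f m m' with
  | zero => exact Sy0.mono h hm
  | succ k ih => exact ⟨h.1.mono hm, fun s => ih (h.2 s) (by linarith)⟩

lemma Sy.add {k : ℕ} {m : ℝ} {f g : V d × V d → ℂ} (hf : Sy K k m f) (hg : Sy K k m g) :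
    Sy K k m (fun q => f q + g q) := by
  induction k generalizing f g m with
  | zero => exact Sy0.add hf hg
  | succ k ih =>
    refine ⟨hf.1.add hg.1, fun s => ?_⟩
    rw [dirDeriv_add _ hf.1.1 hg.1.1]
    exact ih (hf.2 s) (hg.2 s)

lemma Sy.const_mul {k : ℕ} {m : ℝ} {f : V d × V d → ℂ} (c : ℂ) (hf : Sy K k m f) :
    Sy K k m (fun q => c * f q) := by
  induction k generalizing f m with
  | zero => exact Sy0.const_mul c hf
  | succ k ih =>
    refine ⟨hf.1.const_mul c, fun s => ?_⟩
    rw [dirDeriv_const_mul _ c hf.1.1]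
    exact ih (hf.2 s)

lemma Sy.mul {k : ℕ} {m m' : ℝ} {f g : V d × V d → ℂ} (hf : Sy K k m f) (hg : Sy K k m' g) :
    Sy K k (m + m') (fun q => f q * g q) := by
  induction k generalizing f g m m' with
  | zero => exact Sy0.mul hf hg
  | succ k ih =>
    refine ⟨hf.1.mul hg.1, fun s => ?_⟩
    rw [dirDeriv_mul _ hf.1.1 hg.1.1]
    refine Sy.add ?_ ?_
    · exact (ih hf.pred (hg.2 s)).mono (by linarith)
    · exact (ih (hf.2 s) hg.pred).mono (by linarith)

def SyI (K : Set (V d)) (m : ℝ) (a : V d × V d → ℂ) : Prop := ∀ k, Sy K k m a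

lemma SyI.deriv {m : ℝ} {f : V d × V d → ℂ} (h : SyI K m f) (s : Fin d ⊕ Fin d) :
    SyI K (m - wt s) (dirDeriv (dir s) f) := fun k => (h (k + 1)).2 s

/-- index list of a multi-index -/
def idx (α : Fin d → ℕ) : List (Fin d) :=
  (List.finRange d).flatMap fun i => List.replicate (α i) i

lemma count_idx (α : Fin d → ℕ) (k : Fin d) : (idx α).count k = α k := by
  unfold idx
  rw [List.count_flatMap]
  have : (List.map (List.count k ∘ fun i => List.replicate (α i) i) (List.finRange d)).sum
      = ∑ i, if i = k then α i else 0 := by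
    rw [Fin.sum_univ_def]
    congr 1
    apply List.map_congr_left
    intro i _
    simp [List.count_replicate]
  rw [this]; simp

lemma length_idx (α : Fin d → ℕ) : (idx α).length = mOrder α := by
  unfold idx mOrder
  rw [List.length_flatMap, Fin.sum_univ_def]
  simp

lemma mpderiv_eq {F : Type*} [NormedAddCommGroup F] [NormedSpace ℝ F]
    (α : Fin d → ℕ) (f : V d → F) :
    mpderiv α f = dirDerivList ((idx α).map fun i => Pi.single i 1) f := by
  unfold mpderiv mpderivB idx
  rw [List.map_flatMap]
  simp

lemma mpderiv_slice {A : V d × V d → ℂ} (hA : ContDiff ℝ ∞ A) (α : Fin d → ℕ) (y η : V d) :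
    mpderiv α (fun η => A (y, η)) η
      = dirDerivList ((idx α).map fun i => dir (Sum.inr i)) A (y, η) := by
  rw [mpderiv_eq, list_slice_right hA, List.map_map]
  rfl

lemma mpderiv_slice2 {A : V d × V d → ℂ} (hA : ContDiff ℝ ∞ A) (α β : Fin d → ℕ) (y η : V d) :
    mpderiv β (fun y => mpderiv α (fun η => A (y, η)) η) y
      = dirDerivList (((idx β).map Sum.inl ++ (idx α).map Sum.inr).map dir) A (y, η) := by
  have : (fun y => mpderiv α (fun η => A (y, η)) η) =
     fun y => dirDerivList ((idx α).map fun i => dir (Sum.inr i)) A (y, η) := by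
    funext y; exact mpderiv_slice hA α y η
  rw [this, mpderiv_eq, list_slice_left (smooth_list _ hA), List.map_append, list_append]
  simp only [List.map_map]
  rfl

lemma beq_ll (i j : Fin d) : ((Sum.inl i : Fin d ⊕ Fin d) == Sum.inl j) = (i == j) := rfl
lemma beq_rr (i j : Fin d) : ((Sum.inr i : Fin d ⊕ Fin d) == Sum.inr j) = (i == j) := rfl
lemma beq_lr (i j : Fin d) : ((Sum.inl i : Fin d ⊕ Fin d) == Sum.inr j) = false := rfl
lemma beq_rl (i j : Fin d) : ((Sum.inr i : Fin d ⊕ Fin d) == Sum.inl j) = false := rfl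

instance lawfulSum : LawfulBEq (Fin d ⊕ Fin d) where
  eq_of_beq := by
    rintro (i | i) (j | j) h
    · rw [beq_ll] at h; rw [eq_of_beq h]
    · rw [beq_lr] at h; cases h
    · rw [beq_rl] at h; cases h
    · rw [beq_rr] at h; rw [eq_of_beq h]
  rfl := by
    rintro (i | i)
    · rw [beq_ll]; exact beq_self_eq_true i
    · rw [beq_rr]; exact beq_self_eq_true i

lemma sum_count (l : List (Fin d ⊕ Fin d)) :
    (mOrder (fun j => l.count (Sum.inr j)) : ℝ) = (l.map wt).sum := by
  unfold mOrder
  induction l with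
  | nil => simp
  | cons s l ih =>
    rw [List.map_cons, List.sum_cons, ← ih]
    cases s with
    | inl i => simp [wt]
    | inr i => simp [wt, List.count_cons, Finset.sum_add_distrib, add_comm]

lemma perm_word (l : List (Fin d ⊕ Fin d)) :
    l.Perm ((idx (fun j => l.count (Sum.inl j))).map Sum.inl ++
      (idx (fun j => l.count (Sum.inr j))).map Sum.inr) := by
  rw [List.perm_iff_count]
  intro s
  rw [List.count_append]
  cases s with
  | inl i =>
    have h0 : ((idx (fun j => l.count (Sum.inr j))).map Sum.inr).count
        (Sum.inl i : Fin d ⊕ Fin d) = 0 := List.count_eq_zero_of_not_mem (by simp)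
    rw [List.count_map_of_injective _ _ Sum.inl_injective, count_idx, h0]
    rfl
  | inr i =>
    have h0 : ((idx (fun j => l.count (Sum.inl j))).map Sum.inl).count
        (Sum.inr i : Fin d ⊕ Fin d) = 0 := List.count_eq_zero_of_not_mem (by simp)
    rw [List.count_map_of_injective _ _ Sum.inr_injective, count_idx, h0, zero_add]

lemma symbol_smooth {m : ℝ} {a : V d → V d → ℂ} (h : IsSymbol Set.univ m 1 0 a) :
    ContDiff ℝ ∞ (fun q : V d × V d => a q.1 q.2) := by
  have := h.1
  rwa [Set.univ_prod_univ, contDiffOn_univ] at this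

lemma symbol_SyI (hK : IsCompact K) {m : ℝ} {a : V d → V d → ℂ} (h : IsSymbol Set.univ m 1 0 a) :
    SyI K m (fun q => a q.1 q.2) := by
  have hs := symbol_smooth h
  have base : ∀ l : List (Fin d ⊕ Fin d), Sy0 K (m - (l.map wt).sum)
      (dirDerivList (l.map dir) (fun q : V d × V d => a q.1 q.2)) := by
    intro l
    refine ⟨smooth_list _ hs, ?_⟩
    obtain ⟨C, hC⟩ := h.2 (fun j => l.count (Sum.inr j)) (fun j => l.count (Sum.inl j)) K hK
      (Set.subset_univ _)
    refine ⟨C, fun y hy η => ?_⟩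
    rw [list_perm ((perm_word l).map dir) hs]
    have h1 := hC y hy η
    rw [sum_count, mpderiv_slice2 hs] at h1
    simpa using h1
  have main : ∀ k, ∀ l : List (Fin d ⊕ Fin d), Sy K k (m - (l.map wt).sum)
      (dirDerivList (l.map dir) (fun q : V d × V d => a q.1 q.2)) := by
    intro k
    induction k with
    | zero => exact base
    | succ k ih =>
      intro l
      refine ⟨base l, fun s => ?_⟩
      have := ih (s :: l)
      simp only [List.map_cons, List.sum_cons, dirDerivList] at this
      exact this.mono (by linarith)
  intro k
  have := main k []
  simp only [List.map_nil, List.sum_nil, sub_zero, dirDerivList] at this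
  exact this

/-- structure of `∂_ξ^α (e^{iΦ} b)` -/
lemma osc_symbol {r m : ℝ} (hr : 0 ≤ r) {Φ b : V d × V d → ℂ} (hΦ : SyI K r Φ) (hb : SyI K m b)
    (l : List (Fin d)) :
    ∃ c, SyI K (m - l.length * (1 - r)) c ∧
      dirDerivList (l.map fun i => dir (Sum.inr i)) (fun q => Complex.exp (Complex.I * Φ q) * b q)
        = fun q => Complex.exp (Complex.I * Φ q) * c q := by
  induction l with
  | nil => exact ⟨b, by simpa using hb, rfl⟩
  | cons i l ih =>
    obtain ⟨c, hc, hd⟩ := ih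
    refine ⟨fun q => (Complex.I * dirDeriv (dir (Sum.inr i)) Φ q) * c q
      + dirDeriv (dir (Sum.inr i)) c q, ?_, ?_⟩
    · intro k
      refine Sy.add ?_ ?_
      · refine (((hΦ.deriv (Sum.inr i) k).const_mul Complex.I).mul (hc k)).mono ?_
        simp only [wt, List.length_cons]; push_cast; linarith
      · refine (hc.deriv (Sum.inr i) k).mono ?_
        simp only [wt, List.length_cons]; push_cast; linarith
    · simp only [List.map_cons, dirDerivList]
      rw [hd]
      exact dirDeriv_exp_mul _ (hΦ 0).1 (hc 0).1

/-- restriction of a symbol to a family of frequencies -/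
lemma SyI.bd {P : Type*} {m : ℝ} {a : V d × V d → ℂ} (ha : SyI K m a) (σ : P → V d) (w : P → ℝ)
    (c : ℝ) (hw : ∀ p, (1 + ‖σ p‖) ^ m ≤ c * w p) (i : Fin d) :
    BdI K (Pi.single i 1) w (fun p y => a (y, σ p)) := by
  have base : ∀ a : V d × V d → ℂ, SyI K m a →
      Bd K (Pi.single i 1 : V d) 0 w (fun p y => a (y, σ p)) := by
    intro a ha
    obtain ⟨hs, C, hC⟩ := ha 0
    refine ⟨fun p => hs.comp (contDiff_prodMk_left _), |C| * c, fun p y hy => ?_⟩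
    rw [mul_assoc]
    exact (hC y hy _).trans ((mul_le_mul_of_nonneg_right (le_abs_self C)
      (Real.rpow_nonneg (br_pos _).le _)).trans
      (mul_le_mul_of_nonneg_left (hw p) (abs_nonneg C)))
  intro k
  induction k generalizing a with
  | zero => exact base a ha
  | succ k ih =>
    refine ⟨base a ha, ?_⟩
    have h1 : SyI K m (dirDeriv (dir (Sum.inl i)) a) := by simpa [wt] using ha.deriv (Sum.inl i)
    convert ih h1 using 2 with p
    funext y
    exact dirDeriv_slice_left (ha 0).1 _ y (σ p)

/-- derivative in frequency -/
lemma SyI.fderiv_right {m : ℝ} {a : V d × V d → ℂ} (ha : SyI K m a) :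
    ∃ C : ℝ, 0 ≤ C ∧ ∀ y ∈ K, ∀ η ζ : V d,
      ‖fderiv ℝ a (y, η) (0, ζ)‖ ≤ C * (1 + ‖η‖) ^ (m - 1) * ‖ζ‖ := by
  have h := fun j : Fin d => (ha.deriv (Sum.inr j) 0).2
  choose C hC using h
  refine ⟨∑ j, |C j|, Finset.sum_nonneg fun j _ => abs_nonneg _, fun y hy η ζ => ?_⟩
  have hz : ((0, ζ) : V d × V d) = ∑ j, ζ j • dir (Sum.inr j) := by
    apply Prod.ext
    · simp [dir, Prod.fst_sum]
    · simp only [Prod.snd_sum, Prod.smul_snd, dir]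
      exact pi_eq_sum_univ' ζ
  rw [hz, map_sum, Finset.sum_mul, Finset.sum_mul]
  refine (norm_sum_le _ _).trans (Finset.sum_le_sum fun j _ => ?_)
  rw [map_smul, norm_smul, mul_comm]
  have h1 : ‖fderiv ℝ a (y, η) (dir (Sum.inr j))‖ ≤ |C j| * (1 + ‖η‖) ^ (m - 1) :=
    (hC j y hy η).trans (mul_le_mul_of_nonneg_right (le_abs_self _)
      (Real.rpow_nonneg (br_pos _).le _))
  exact mul_le_mul h1 (norm_le_pi_norm ζ j) (norm_nonneg _) ((norm_nonneg _).trans h1)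

lemma SyI.diff {r : ℝ} (hr : r < 1) {a : V d × V d → ℂ} (ha : SyI K r a) :
    ∃ C : ℝ, ∀ y ∈ K, ∀ t ∈ Set.Icc (0 : ℝ) 1, ∀ ξ ζ : V d, ‖ζ‖ ≤ ‖ξ‖ / 2 →
      ‖a (y, ξ) - a (y, ξ + t • ζ)‖ ≤ C * (1 + ‖ζ‖) ^ r := by
  obtain ⟨C, hC0, hC⟩ := ha.fderiv_right
  refine ⟨C, fun y hy t ht ξ ζ hζ => ?_⟩
  have hder : ∀ s : ℝ, HasDerivAt (fun s : ℝ => a (y, ξ + s • (t • ζ)))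
      (fderiv ℝ a (y, ξ + s • (t • ζ)) (0, t • ζ)) s := by
    intro s
    have h1 : HasDerivAt (fun s : ℝ => (y, ξ + s • (t • ζ))) (0, t • ζ) s := by
      refine (hasDerivAt_const s y).prodMk ?_
      simpa using ((hasDerivAt_id s).smul_const (t • ζ)).const_add ξ
    exact (sdiff (ha 0).1 _).hasFDerivAt.comp_hasDerivAt s h1
  have htz : ‖t • ζ‖ ≤ ‖ζ‖ := by
    rw [norm_smul, Real.norm_eq_abs, abs_of_nonneg ht.1]
    exact mul_le_of_le_one_left (norm_nonneg _) ht.2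
  have hb := norm_image_sub_le_of_norm_deriv_le_segment_01' (f := fun s : ℝ => a (y, ξ + s • (t • ζ)))
    (C := C * (1 + ‖ζ‖) ^ r) (fun s _ => (hder s).hasDerivWithinAt) (fun s hs => by
      refine (hC y hy _ _).trans ?_
      rw [mul_assoc]
      refine mul_le_mul_of_nonneg_left ?_ hC0
      have hsz : ‖s • (t • ζ)‖ ≤ ‖ζ‖ := by
        rw [norm_smul, Real.norm_eq_abs, abs_of_nonneg hs.1]
        exact (mul_le_of_le_one_left (norm_nonneg _) hs.2.le).trans htz
      have hlow : 1 + ‖ζ‖ ≤ 1 + ‖ξ + s • (t • ζ)‖ := by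
        have := norm_sub_le (ξ + s • (t • ζ)) (s • (t • ζ))
        rw [add_sub_cancel_right] at this
        linarith
      calc (1 + ‖ξ + s • (t • ζ)‖) ^ (r - 1) * ‖t • ζ‖
          ≤ (1 + ‖ζ‖) ^ (r - 1) * (1 + ‖ζ‖) := by
            refine mul_le_mul (Real.rpow_le_rpow_of_nonpos (br_pos ζ) hlow (by linarith))
              (by linarith) (norm_nonneg _) (Real.rpow_nonneg (br_pos _).le _)
        _ = (1 + ‖ζ‖) ^ r := by
            rw [← Real.rpow_add_one (br_pos ζ).ne']; congr 1; ring)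
  simp only [one_smul, zero_smul, add_zero] at hb
  rw [norm_sub_rev]; exact hb

end sy

section osc
variable {d : ℕ} {K : Set (V d)}

/-- the exponential factor -/
noncomputable def ex (ζ y : V d) : ℂ := Complex.exp (-(Complex.I * (dotp y ζ : ℂ)))

lemma dotp_hasFDeriv (ζ y : V d) :
    HasFDerivAt (fun y : V d => dotp y ζ)
      (∑ i, ζ i • (ContinuousLinearMap.proj i : V d →L[ℝ] ℝ)) y := by
  have h : (fun y : V d => dotp y ζ) =
      (∑ i, ζ i • (ContinuousLinearMap.proj i : V d →L[ℝ] ℝ) : V d →L[ℝ] ℝ) := by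
    funext y
    simp [dotp, mul_comm]
  rw [h]
  exact ContinuousLinearMap.hasFDerivAt _

lemma dotp_smooth (ζ : V d) : ContDiff ℝ ∞ (fun y : V d => ((dotp y ζ : ℝ) : ℂ)) := by
  have h : ContDiff ℝ ∞ (fun y : V d => dotp y ζ) := by
    unfold dotp
    fun_prop
  exact Complex.ofRealCLM.contDiff.comp h

lemma ex_smooth (ζ : V d) : ContDiff ℝ ∞ (ex ζ) := by
  unfold ex
  exact (contDiff_const.mul (dotp_smooth ζ)).neg.cexp

lemma ex_norm (ζ y : V d) : ‖ex ζ y‖ = 1 := by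
  unfold ex
  have : -(Complex.I * (dotp y ζ : ℂ)) = ((-dotp y ζ : ℝ) : ℂ) * Complex.I := by
    push_cast; ring
  rw [this, Complex.norm_exp_ofReal_mul_I]

lemma ex_deriv (ζ y : V d) (i : Fin d) :
    fderiv ℝ (ex ζ) y (Pi.single i 1) = -(Complex.I * ζ i) * ex ζ y := by
  have h1 : HasFDerivAt (fun y : V d => ((dotp y ζ : ℝ) : ℂ)) _ y :=
    Complex.ofRealCLM.hasFDerivAt.comp y (dotp_hasFDeriv ζ y)
  have h2 := ((h1.const_mul Complex.I).neg).cexp.fderiv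
  have h3 : ex ζ = fun y => Complex.exp (-(Complex.I * ((dotp y ζ : ℝ) : ℂ))) := rfl
  have h4 : fderiv ℝ (fun y => Complex.exp (-(Complex.I * ((dotp y ζ : ℝ) : ℂ)))) y = _ := h2
  rw [h3, h4]
  simp [Pi.single_apply]
  ring

lemma off_deriv (hK : IsCompact K) {f : V d → ℂ} (hf : ∀ y ∉ K, f y = 0) (e : V d) :
    ∀ y ∉ K, dirDeriv e f y = 0 := by
  intro y hy
  have : f =ᶠ[𝓝 y] fun _ => 0 := by
    filter_upwards [hK.isClosed.isOpen_compl.mem_nhds hy] with z hz using hf z hz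
  unfold dirDeriv
  rw [this.fderiv_eq]; simp

lemma off_integrable (hK : IsCompact K) {f : V d → ℂ} (hf : ∀ y ∉ K, f y = 0)
    (hc : Continuous f) : Integrable f :=
  hc.integrable_of_hasCompactSupport (HasCompactSupport.intro hK hf)

lemma ibp (hK : IsCompact K) {f : V d → ℂ} (hs : ContDiff ℝ ∞ f) (hf : ∀ y ∉ K, f y = 0)
    (ζ : V d) (i : Fin d) :
    ‖∫ y, dirDeriv (Pi.single i 1) f y * ex ζ y‖ = |ζ i| * ‖∫ y, f y * ex ζ y‖ := by
  have hd := smooth_dirDeriv (Pi.single i 1 : V d) hs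
  have i1 : Integrable (fun y => fderiv ℝ f y (Pi.single i 1) * ex ζ y) :=
    off_integrable hK (fun y hy => by
      rw [show fderiv ℝ f y (Pi.single i 1) = 0 from off_deriv hK hf _ y hy, zero_mul])
      (hd.continuous.mul (ex_smooth ζ).continuous)
  have i2 : Integrable (fun y => f y * fderiv ℝ (ex ζ) y (Pi.single i 1)) :=
    off_integrable hK (fun y hy => by rw [hf y hy, zero_mul])
      (hs.continuous.mul (smooth_dirDeriv (Pi.single i 1 : V d) (ex_smooth ζ)).continuous)
  have i3 : Integrable (fun y => f y * ex ζ y) :=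
    off_integrable hK (fun y hy => by rw [hf y hy, zero_mul])
      (hs.continuous.mul (ex_smooth ζ).continuous)
  have key := integral_mul_fderiv_eq_neg_fderiv_mul_of_integrable i1 i2 i3
    (fun x _ => sdiff hs x) (fun x _ => sdiff (ex_smooth ζ) x)
  simp only [ex_deriv] at key
  have h2 : ∫ y, dirDeriv (Pi.single i 1) f y * ex ζ y
      = (Complex.I * ζ i) * ∫ y, f y * ex ζ y := by
    rw [← integral_const_mul]
    unfold dirDeriv
    rw [← neg_inj, ← key, ← integral_neg]
    congr 1; funext y; ring
  rw [h2, norm_mul]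
  simp

lemma ibp_iter (hK : IsCompact K) {f : V d → ℂ} (hs : ContDiff ℝ ∞ f) (hf : ∀ y ∉ K, f y = 0)
    (ζ : V d) (i : Fin d) (N : ℕ) :
    (∀ y ∉ K, dirDerivList (List.replicate N (Pi.single i 1)) f y = 0) ∧
    ‖∫ y, dirDerivList (List.replicate N (Pi.single i 1)) f y * ex ζ y‖
      = |ζ i| ^ N * ‖∫ y, f y * ex ζ y‖ := by
  induction N with
  | zero => exact ⟨hf, by simp [dirDerivList]⟩
  | succ N ih =>
    simp only [List.replicate_succ, dirDerivList]
    refine ⟨off_deriv hK ih.1 _, ?_⟩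
    rw [ibp hK (smooth_list _ hs) ih.1, ih.2]; ring

lemma int_bound (hK : IsCompact K) {f : V d → ℂ} (hf : ∀ y ∉ K, f y = 0) (ζ : V d) {B : ℝ}
    (hB : ∀ y ∈ K, ‖f y‖ ≤ B) : ‖∫ y, f y * ex ζ y‖ ≤ B * volume.real K := by
  rw [← setIntegral_eq_integral_of_forall_compl_eq_zero (s := K)
    (fun y hy => by simp [hf y hy])]
  refine norm_setIntegral_le_of_norm_le_const hK.measure_lt_top (fun y hy => ?_)
  rw [norm_mul, ex_norm, mul_one]; exact hB y hy

lemma exists_coord (ζ : V d) (h : 0 < ‖ζ‖) : ∃ i, |ζ i| = ‖ζ‖ := by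
  by_contra! hne
  have : ‖ζ‖ < ‖ζ‖ := (pi_norm_lt_iff h).2 fun i =>
    lt_of_le_of_ne (norm_le_pi_norm ζ i) (hne i)
  exact lt_irrefl _ this

/-- Non-stationary phase estimate, uniform in a parameter. -/
lemma core {P : Type*} (hK : IsCompact K) {r : ℝ} (hr : r ∈ Set.Ico (0 : ℝ) 1)
    {w : P → ℝ} (hw : ∀ p, 0 ≤ w p) {ζ : P → V d} {ψ g : P → V d → ℂ}
    (hψs : ∀ p, ContDiff ℝ ∞ (ψ p)) (hψr : ∀ p y, (ψ p y).im = 0)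
    (hgs : ∀ p, ContDiff ℝ ∞ (g p)) (hg0 : ∀ p, ∀ y ∉ K, g p y = 0)
    (hgb : ∃ C : ℝ, ∀ p, ∀ y ∈ K, ‖g p y‖ ≤ C * w p)
    (hψ : ∀ i : Fin d, BdI K (Pi.single i 1) (fun p => (1 + ‖ζ p‖) ^ r)
      (fun p => dirDeriv (Pi.single i 1) (ψ p)))
    (hg : ∀ i : Fin d, BdI K (Pi.single i 1) w g) (n : ℕ) :
    ∃ C : ℝ, 0 ≤ C ∧ ∀ p, (1 + ‖ζ p‖) ^ n *
      ‖∫ y, Complex.exp (Complex.I * ψ p y) * g p y * ex (ζ p) y‖ ≤ C * w p := by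
  have hexp : ∀ p y, ‖Complex.exp (Complex.I * ψ p y)‖ = 1 := by
    intro p y
    rw [Complex.norm_exp]; simp [hψr p y]
  have hfs : ∀ p, ContDiff ℝ ∞ (fun y => Complex.exp (Complex.I * ψ p y) * g p y) :=
    fun p => (smooth_exp (hψs p)).mul (hgs p)
  have hf0 : ∀ p, ∀ y ∉ K, (fun y => Complex.exp (Complex.I * ψ p y) * g p y) y = 0 :=
    fun p y hy => by simp [hg0 p y hy]
  obtain ⟨N, hN⟩ := exists_nat_ge ((n : ℝ) / (1 - r))
  have h1r : 0 < 1 - r := by linarith [hr.2]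
  rw [div_le_iff₀ h1r] at hN
  obtain ⟨C0, hC0⟩ := hgb
  have hu : ∀ p, 0 ≤ (1 + ‖ζ p‖) ^ r := fun p => Real.rpow_nonneg (br_pos _).le _
  have hD : ∀ i : Fin d, ∃ C : ℝ, ∀ p, |ζ p i| ^ N *
      ‖∫ y, Complex.exp (Complex.I * ψ p y) * g p y * ex (ζ p) y‖ ≤
        C * (w p * (1 + (1 + ‖ζ p‖) ^ r) ^ N) := by
    intro i
    obtain ⟨G, hG, hd⟩ := osc_deriv hψs (hψ i) (hg i) hw hu N
    obtain ⟨_, C, hC⟩ := hG 0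
    refine ⟨C * volume.real K, fun p => ?_⟩
    obtain ⟨hz, hi⟩ := ibp_iter hK (hfs p) (hf0 p) (ζ p) i N
    rw [← hi]
    refine (int_bound hK hz (ζ p) (B := C * (w p * (1 + (1 + ‖ζ p‖) ^ r) ^ N)) ?_).trans
      (le_of_eq (by ring))
    intro y hy
    rw [hd p, norm_mul, hexp, one_mul]
    exact hC p y hy
  choose D hD using hD
  set M : ℝ := ∑ i, |D i| with hM
  have hM0 : 0 ≤ M := Finset.sum_nonneg fun i _ => abs_nonneg _
  refine ⟨2 ^ n * (|C0| * volume.real K) + M * 4 ^ N, by positivity, fun p => ?_⟩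
  have hcube : 0 ≤ M * 4 ^ N * w p := mul_nonneg (by positivity) (hw p)
  have hcube' : 0 ≤ 2 ^ n * (|C0| * volume.real K) * w p := mul_nonneg (by positivity) (hw p)
  set J := ‖∫ y, Complex.exp (Complex.I * ψ p y) * g p y * ex (ζ p) y‖ with hJ
  have hJ0 : 0 ≤ J := norm_nonneg _
  rw [add_mul]
  rcases le_or_gt ‖ζ p‖ 1 with h1 | h1
  · have hb : J ≤ |C0| * w p * volume.real K := by
      refine int_bound hK (hf0 p) (ζ p) fun y hy => ?_
      rw [norm_mul, hexp, one_mul]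
      exact (hC0 p y hy).trans (mul_le_mul_of_nonneg_right (le_abs_self _) (hw p))
    have h2 : (1 + ‖ζ p‖) ^ n ≤ 2 ^ n := pow_le_pow_left₀ (br_pos _).le (by linarith) n
    have := mul_le_mul h2 hb hJ0 (by positivity)
    nlinarith
  · obtain ⟨i, hi⟩ := exists_coord (ζ p) (by linarith)
    have h2 := hD i p
    rw [hi] at h2
    set z := 1 + ‖ζ p‖ with hz
    have hz1 : 1 ≤ z := br_one _
    have hz0 : 0 < z := br_pos _
    have hDM : D i ≤ M := (le_abs_self _).trans
      (Finset.single_le_sum (f := fun i => |D i|) (fun i _ => abs_nonneg _) (Finset.mem_univ i))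
    have hzr : 1 ≤ z ^ r := Real.one_le_rpow hz1 hr.1
    have h3 : (1 + z ^ r) ^ N ≤ (2 * z ^ r) ^ N :=
      pow_le_pow_left₀ (by linarith) (by linarith) N
    have h4 : (z / 2) ^ N * J ≤ M * (w p * (2 * z ^ r) ^ N) := by
      calc (z / 2) ^ N * J ≤ ‖ζ p‖ ^ N * J := by
            refine mul_le_mul_of_nonneg_right ?_ hJ0
            exact pow_le_pow_left₀ (by positivity) (by linarith) N
        _ ≤ _ := h2
        _ ≤ M * (w p * (1 + z ^ r) ^ N) := by
            refine mul_le_mul_of_nonneg_right hDM (mul_nonneg (hw p) ?_)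
            positivity
        _ ≤ _ := by
            refine mul_le_mul_of_nonneg_left ?_ hM0
            exact mul_le_mul_of_nonneg_left h3 (hw p)
    have h5 : z ^ n * (z ^ r) ^ N ≤ z ^ N := by
      rw [← Real.rpow_natCast z n, ← Real.rpow_natCast z N, ← Real.rpow_natCast (z ^ r) N,
        ← Real.rpow_mul hz0.le, ← Real.rpow_add hz0]
      exact Real.rpow_le_rpow_of_exponent_le hz1 (by nlinarith)
    have h6 : z ^ N * J ≤ M * 4 ^ N * w p * (z ^ r) ^ N := by
      rw [div_pow, mul_pow] at h4
      have h2N : (0 : ℝ) < 2 ^ N := by positivity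
      have : (4 : ℝ) ^ N = 2 ^ N * 2 ^ N := by rw [← mul_pow]; norm_num
      rw [div_mul_eq_mul_div, div_le_iff₀ h2N] at h4
      rw [this]; nlinarith
    have hq : 0 < (z ^ r) ^ N := by positivity
    have h7 : z ^ n * J ≤ M * 4 ^ N * w p := by
      refine le_of_mul_le_mul_right ?_ hq
      calc z ^ n * J * (z ^ r) ^ N = (z ^ n * (z ^ r) ^ N) * J := by ring
        _ ≤ z ^ N * J := mul_le_mul_of_nonneg_right h5 hJ0
        _ ≤ _ := h6
    linarith

end osc

section final
variable {d : ℕ} {K : Set (V d)}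

lemma bd_diff {P : Type*} {r : ℝ} (ξ σ : P → V d) (u : P → ℝ)
    (D : ∀ a : V d × V d → ℂ, SyI K r a →
      ∃ C : ℝ, ∀ p, ∀ y ∈ K, ‖a (y, ξ p) - a (y, σ p)‖ ≤ C * u p)
    {a : V d × V d → ℂ} (ha : SyI K r a) (i : Fin d) :
    BdI K (Pi.single i 1) u (fun p y => a (y, ξ p) - a (y, σ p)) := by
  have sl : ∀ (a : V d × V d → ℂ), SyI K r a → ∀ η : V d, ContDiff ℝ ∞ fun y => a (y, η) :=
    fun a ha η => (ha 0).1.comp (contDiff_prodMk_left _)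
  have base : ∀ a : V d × V d → ℂ, SyI K r a →
      Bd K (Pi.single i 1 : V d) 0 u (fun p y => a (y, ξ p) - a (y, σ p)) := by
    intro a ha
    exact ⟨fun p => (sl a ha _).sub (sl a ha _), D a ha⟩
  intro k
  induction k generalizing a with
  | zero => exact base a ha
  | succ k ih =>
    refine ⟨base a ha, ?_⟩
    have h1 : SyI K r (dirDeriv (dir (Sum.inl i)) a) := by simpa [wt] using ha.deriv (Sum.inl i)
    convert ih h1 using 2 with p
    rw [dirDeriv_sub _ (sl a ha _) (sl a ha _)]
    funext y
    rw [dirDeriv_slice_left (ha 0).1, dirDeriv_slice_left (ha 0).1]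
    rfl

lemma main_est {r m μ : ℝ} (hK : IsCompact K) (hr : r ∈ Set.Ico (0 : ℝ) 1)
    (Φ : V d → V d → ℝ) {b c : V d × V d → ℂ}
    (hΦ : SyI K r (fun q => ((Φ q.1 q.2 : ℝ) : ℂ))) (hb : SyI K m b) (hc : SyI K μ c)
    (hb0 : ∀ y ∉ K, ∀ η, b (y, η) = 0)
    {P : Type*} (ξ σ ζ : P → V d) (w : P → ℝ) (hw0 : ∀ p, 0 ≤ w p) (c0 : ℝ)
    (hw : ∀ p, (1 + ‖ξ p‖) ^ m * (1 + ‖σ p‖) ^ μ ≤ c0 * w p)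
    (D : ∀ a : V d × V d → ℂ, SyI K r a →
      ∃ C : ℝ, ∀ p, ∀ y ∈ K, ‖a (y, ξ p) - a (y, σ p)‖ ≤ C * (1 + ‖ζ p‖) ^ r) (n : ℕ) :
    ∃ C : ℝ, 0 ≤ C ∧ ∀ p, (1 + ‖ζ p‖) ^ n *
      ‖∫ y, (Complex.exp (Complex.I * (Φ y (ξ p) : ℂ)) * b (y, ξ p)) *
        (starRingEnd ℂ) (Complex.exp (Complex.I * (Φ y (σ p) : ℂ)) * c (y, σ p)) * ex (ζ p) y‖
        ≤ C * w p := by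
  have sl : ∀ (a : V d × V d → ℂ), ContDiff ℝ ∞ a → ∀ η : V d, ContDiff ℝ ∞ fun y => a (y, η) :=
    fun a ha η => ha.comp (contDiff_prodMk_left _)
  have hwp : ∀ p, 0 ≤ (1 + ‖ξ p‖) ^ m := fun p => Real.rpow_nonneg (br_pos _).le _
  have hwp' : ∀ p, 0 ≤ (1 + ‖σ p‖) ^ μ := fun p => Real.rpow_nonneg (br_pos _).le _
  have hΦs := fun η => sl _ (hΦ 0).1 η
  have hgb : ∃ C : ℝ, ∀ p, ∀ y ∈ K,
      ‖b (y, ξ p) * (starRingEnd ℂ) (c (y, σ p))‖ ≤ C * w p := by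
    obtain ⟨C, hC⟩ := (hb 0).2
    obtain ⟨C', hC'⟩ := (hc 0).2
    refine ⟨|C| * |C'| * c0, fun p y hy => ?_⟩
    rw [norm_mul, RCLike.norm_conj]
    have h1 : ‖b (y, ξ p)‖ ≤ |C| * (1 + ‖ξ p‖) ^ m :=
      (hC y hy _).trans (mul_le_mul_of_nonneg_right (le_abs_self _) (hwp p))
    have h2 : ‖c (y, σ p)‖ ≤ |C'| * (1 + ‖σ p‖) ^ μ :=
      (hC' y hy _).trans (mul_le_mul_of_nonneg_right (le_abs_self _) (hwp' p))
    calc _ ≤ (|C| * (1 + ‖ξ p‖) ^ m) * (|C'| * (1 + ‖σ p‖) ^ μ) :=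
          mul_le_mul h1 h2 (norm_nonneg _) ((norm_nonneg _).trans h1)
      _ = (|C| * |C'|) * ((1 + ‖ξ p‖) ^ m * (1 + ‖σ p‖) ^ μ) := by ring
      _ ≤ (|C| * |C'|) * (c0 * w p) := mul_le_mul_of_nonneg_left (hw p) (by positivity)
      _ = _ := by ring
  obtain ⟨C, hC0, hC⟩ := core (P := P) hK hr (w := w) hw0 (ζ := ζ)
    (ψ := fun p y => ((Φ y (ξ p) : ℝ) : ℂ) - ((Φ y (σ p) : ℝ) : ℂ))
    (g := fun p y => b (y, ξ p) * (starRingEnd ℂ) (c (y, σ p)))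
    (fun p => (hΦs _).sub (hΦs _)) (fun p y => by simp)
    (fun p => (sl _ (hb 0).1 _).mul (smooth_conj (sl _ (hc 0).1 _)))
    (fun p y hy => by simp [hb0 y hy]) hgb
    (fun i k => (bd_diff ξ σ _ D hΦ i (k + 1)).2)
    (fun i k => by
      refine Bd.mono (Bd.mul (hb.bd ξ _ 1 (fun p => (one_mul _).ge) i k)
        (hc.bd σ _ 1 (fun p => (one_mul _).ge) i k).conj hwp) (fun p => mul_nonneg (hwp p) (hwp' p))
        c0 hw) n
  refine ⟨C, hC0, fun p => ?_⟩
  have h := hC p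
  have he : ∀ y, (Complex.exp (Complex.I * (Φ y (ξ p) : ℂ)) * b (y, ξ p)) *
        (starRingEnd ℂ) (Complex.exp (Complex.I * (Φ y (σ p) : ℂ)) * c (y, σ p)) * ex (ζ p) y
      = Complex.exp (Complex.I * (((Φ y (ξ p) : ℝ) : ℂ) - ((Φ y (σ p) : ℝ) : ℂ))) *
        (b (y, ξ p) * (starRingEnd ℂ) (c (y, σ p))) * ex (ζ p) y := by
    intro y
    rw [map_mul, ← Complex.exp_conj, map_mul, Complex.conj_I, Complex.conj_ofReal, mul_sub,
      sub_eq_add_neg, Complex.exp_add, neg_mul]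
    ring
  simp only [he]
  exact h

lemma rpow_cmp {A B : ℝ} (hA : 0 < A) (hB : 0 < B) (h1 : A ≤ 2 * B) (h2 : B ≤ 2 * A) (s : ℝ) :
    A ^ s ≤ 2 ^ |s| * B ^ s := by
  rcases le_total 0 s with hs | hs
  · rw [abs_of_nonneg hs, ← Real.mul_rpow (by norm_num) hB.le]
    exact Real.rpow_le_rpow hA.le h1 hs
  · rw [abs_of_nonpos hs, Real.rpow_neg (by norm_num), ← Real.inv_rpow (by norm_num),
      ← Real.mul_rpow (by norm_num) hB.le]
    exact Real.rpow_le_rpow_of_nonpos (by positivity) (by linarith) hs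

lemma rpow_cmp2 {A Z : ℝ} (hA : 1 ≤ A) (hZ : 1 ≤ Z) (h : A ≤ 3 * Z) (s : ℝ) :
    A ^ s ≤ 3 ^ |s| * Z ^ |s| := by
  rw [← Real.mul_rpow (by norm_num) (by linarith)]
  exact (Real.rpow_le_rpow_of_exponent_le hA (le_abs_self s)).trans
    (Real.rpow_le_rpow (by linarith) h (abs_nonneg s))

lemma mpow_le (ζ : V d) (α : Fin d → ℕ) : |mpow ζ α| ≤ (1 + ‖ζ‖) ^ mOrder α := by
  unfold mpow mOrder
  rw [Finset.abs_prod, ← Finset.prod_pow_eq_pow_sum]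
  refine Finset.prod_le_prod (fun i _ => abs_nonneg _) fun i _ => ?_
  rw [abs_pow]
  refine pow_le_pow_left₀ (abs_nonneg _) ?_ _
  have := norm_le_pi_norm ζ i
  rw [Real.norm_eq_abs] at this; linarith

end final

end S7

/-- estimates (2.24)/(2.25) and Lemma 2.8 / `ha2`: the function
`v_α(ξ,ζ;t) = ζ^α ∫ a₁(y,ξ) conj((∂_ξ^α a₂)(y,ξ+tζ)) e^{-i⟨y,ζ⟩} dy` is
`O((1+|ξ|)^{m-|α|(1-r)})` for `|ζ| ≤ |ξ|/2` and rapidly decaying for `|ζ| ≥ |ξ|/2`. -/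
theorem statement7 {d : ℕ} (r m₁ m₂ : ℝ) (hr : r ∈ Set.Ico (0 : ℝ) 1)
    (Φ : (Fin d → ℝ) → (Fin d → ℝ) → ℝ)
    (b₁ b₂ : (Fin d → ℝ) → (Fin d → ℝ) → ℂ)
    (hΦ : IsSymbol Set.univ r 1 0 fun x ξ => ((Φ x ξ : ℝ) : ℂ))
    (hb₁ : IsSymbol Set.univ m₁ 1 0 b₁)
    (hb₂ : IsSymbol Set.univ m₂ 1 0 b₂)
    (a₁ a₂ : (Fin d → ℝ) → (Fin d → ℝ) → ℂ)
    (ha₁ : a₁ = fun x ξ => Complex.exp (Complex.I * (Φ x ξ : ℂ)) * b₁ x ξ)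
    (ha₂ : a₂ = fun x ξ => Complex.exp (Complex.I * (Φ x ξ : ℂ)) * b₂ x ξ)
    (K₀ : Set (Fin d → ℝ)) (hK₀ : IsCompact K₀)
    (hsupp : ∀ x ∉ K₀, ∀ ξ : Fin d → ℝ, a₁ x ξ = 0 ∧ a₂ x ξ = 0)
    (α : Fin d → ℕ)
    (v : (Fin d → ℝ) → (Fin d → ℝ) → ℝ → ℂ)
    (hv : v = fun ξ ζ t => (mpow ζ α : ℂ) *
      ∫ y : Fin d → ℝ, a₁ y ξ *
        (starRingEnd ℂ) (mpderiv α (fun η => a₂ y η) (ξ + t • ζ)) *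
        Complex.exp (-(Complex.I * (dotp y ζ : ℂ)))) :
    (∃ C : ℝ, ∀ t ∈ Set.Icc (0 : ℝ) 1, ∀ ξ ζ : Fin d → ℝ, ‖ζ‖ ≤ ‖ξ‖ / 2 →
      ‖v ξ ζ t‖ ≤ C * (1 + ‖ξ‖) ^ (m₁ + m₂ - (mOrder α : ℝ) * (1 - r))) ∧
    (∀ n : ℕ, ∃ Cn : ℝ, ∀ t ∈ Set.Icc (0 : ℝ) 1, ∀ ξ ζ : Fin d → ℝ, ‖ξ‖ / 2 ≤ ‖ζ‖ →
      ‖v ξ ζ t‖ ≤ Cn * (1 + ‖ζ‖) ^ (-(n : ℝ))) := by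
  have hΦ' := S7.symbol_SyI hK₀ hΦ
  have hb₁' := S7.symbol_SyI hK₀ hb₁
  have hb₂' := S7.symbol_SyI hK₀ hb₂
  obtain ⟨c, hc, hcd⟩ := S7.osc_symbol hr.1 hΦ' hb₂' (S7.idx α)
  rw [S7.length_idx] at hc
  set μ : ℝ := m₂ - (mOrder α : ℝ) * (1 - r) with hμ
  have hb0 : ∀ y ∉ K₀, ∀ η, b₁ y η = 0 := by
    intro y hy η
    have := (hsupp y hy η).1
    rw [ha₁] at this
    simpa [Complex.exp_ne_zero] using this
  have hmp : ∀ y η, mpderiv α (fun η => a₂ y η) η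
      = Complex.exp (Complex.I * (Φ y η : ℂ)) * c (y, η) := by
    intro y η
    have h1 := S7.mpderiv_slice (A := fun q : S7.V d × S7.V d =>
      Complex.exp (Complex.I * (Φ q.1 q.2 : ℂ)) * b₂ q.1 q.2)
      ((S7.smooth_exp (hΦ' 0).1).mul (hb₂' 0).1) α y η
    rw [hcd] at h1
    rw [ha₂]; exact h1
  have hvb : ∀ t ξ ζ, ‖v ξ ζ t‖ ≤ (1 + ‖ζ‖) ^ mOrder α *
      ‖∫ y, (Complex.exp (Complex.I * (Φ y ξ : ℂ)) * b₁ y ξ) *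
        (starRingEnd ℂ) (Complex.exp (Complex.I * (Φ y (ξ + t • ζ) : ℂ)) * c (y, ξ + t • ζ)) *
          S7.ex ζ y‖ := by
    intro t ξ ζ
    rw [hv]
    simp only [hmp, ha₁]
    rw [norm_mul, Complex.norm_real, Real.norm_eq_abs]
    exact mul_le_mul_of_nonneg_right (S7.mpow_le ζ α) (norm_nonneg _)
  have htz : ∀ t ∈ Set.Icc (0 : ℝ) 1, ∀ ζ : S7.V d, ‖t • ζ‖ ≤ ‖ζ‖ := by
    intro t ht ζ
    rw [norm_smul, Real.norm_eq_abs, abs_of_nonneg ht.1]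
    exact mul_le_of_le_one_left (norm_nonneg _) ht.2
  constructor
  · obtain ⟨C, _, hC⟩ := S7.main_est hK₀ hr Φ hΦ' hb₁' hc hb0
      (P := {p : ℝ × S7.V d × S7.V d // p.1 ∈ Set.Icc (0 : ℝ) 1 ∧ ‖p.2.2‖ ≤ ‖p.2.1‖ / 2})
      (fun p => p.1.2.1) (fun p => p.1.2.1 + p.1.1 • p.1.2.2) (fun p => p.1.2.2)
      (fun p => (1 + ‖p.1.2.1‖) ^ (m₁ + m₂ - (mOrder α : ℝ) * (1 - r)))
      (fun p => Real.rpow_nonneg (S7.br_pos _).le _) (2 ^ |μ|)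
      (by
        rintro ⟨⟨t, ξ, ζ⟩, ht, hζ⟩
        simp only at ht hζ ⊢
        have e1 : m₁ + m₂ - (mOrder α : ℝ) * (1 - r) = m₁ + μ := by rw [hμ]; ring
        rw [e1, Real.rpow_add (S7.br_pos ξ)]
        have h1 := htz t ht ζ
        have h2 := norm_add_le ξ (t • ζ)
        have h3 := norm_sub_le (ξ + t • ζ) (t • ζ)
        rw [add_sub_cancel_right] at h3
        have := S7.rpow_cmp (S7.br_pos (ξ + t • ζ)) (S7.br_pos ξ)
          (by linarith [norm_nonneg ξ]) (by linarith [norm_nonneg ξ]) μ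
        calc _ ≤ (1 + ‖ξ‖) ^ m₁ * (2 ^ |μ| * (1 + ‖ξ‖) ^ μ) :=
              mul_le_mul_of_nonneg_left this (Real.rpow_nonneg (S7.br_pos _).le _)
          _ = _ := by ring)
      (by
        intro a ha
        obtain ⟨C, hC⟩ := ha.diff hr.2
        exact ⟨C, fun p y hy => hC y hy _ p.2.1 _ _ p.2.2⟩) (mOrder α)
    refine ⟨C, fun t ht ξ ζ hζ => (hvb t ξ ζ).trans ?_⟩
    exact hC ⟨(t, ξ, ζ), ht, hζ⟩
  · intro n
    obtain ⟨M, hM⟩ := exists_nat_ge (|m₁| + |μ|)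
    have hbr : ∀ t ∈ Set.Icc (0 : ℝ) 1, ∀ ξ ζ : S7.V d, ‖ξ‖ / 2 ≤ ‖ζ‖ →
        1 + ‖ξ‖ ≤ 3 * (1 + ‖ζ‖) ∧ 1 + ‖ξ + t • ζ‖ ≤ 3 * (1 + ‖ζ‖) := by
      intro t ht ξ ζ hζ
      have h1 := htz t ht ζ
      have h2 := norm_add_le ξ (t • ζ)
      have h3 := norm_nonneg ζ
      constructor <;> linarith
    obtain ⟨C, _, hC⟩ := S7.main_est hK₀ hr Φ hΦ' hb₁' hc hb0
      (P := {p : ℝ × S7.V d × S7.V d // p.1 ∈ Set.Icc (0 : ℝ) 1 ∧ ‖p.2.1‖ / 2 ≤ ‖p.2.2‖})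
      (fun p => p.1.2.1) (fun p => p.1.2.1 + p.1.1 • p.1.2.2) (fun p => p.1.2.2)
      (fun p => (1 + ‖p.1.2.2‖) ^ M)
      (fun p => pow_nonneg (S7.br_pos _).le _) (3 ^ |m₁| * 3 ^ |μ|)
      (by
        rintro ⟨⟨t, ξ, ζ⟩, ht, hζ⟩
        simp only at ht hζ ⊢
        obtain ⟨h1, h2⟩ := hbr t ht ξ ζ hζ
        have k1 := S7.rpow_cmp2 (S7.br_one ξ) (S7.br_one ζ) h1 m₁
        have k2 := S7.rpow_cmp2 (S7.br_one (ξ + t • ζ)) (S7.br_one ζ) h2 μ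
        have k3 : (1 + ‖ζ‖) ^ |m₁| * (1 + ‖ζ‖) ^ |μ| ≤ (1 + ‖ζ‖) ^ M := by
          rw [← Real.rpow_add (S7.br_pos ζ), ← Real.rpow_natCast]
          exact Real.rpow_le_rpow_of_exponent_le (S7.br_one ζ) hM
        calc _ ≤ (3 ^ |m₁| * (1 + ‖ζ‖) ^ |m₁|) * (3 ^ |μ| * (1 + ‖ζ‖) ^ |μ|) :=
              mul_le_mul k1 k2 (Real.rpow_nonneg (S7.br_pos _).le _) (by positivity)
          _ = (3 ^ |m₁| * 3 ^ |μ|) * ((1 + ‖ζ‖) ^ |m₁| * (1 + ‖ζ‖) ^ |μ|) := by ring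
          _ ≤ _ := mul_le_mul_of_nonneg_left k3 (by positivity))
      (by
        intro a ha
        obtain ⟨C, hC⟩ := (ha 0).2
        refine ⟨|C| * 3 ^ r + |C| * 3 ^ r, ?_⟩
        rintro ⟨⟨t, ξ, ζ⟩, ht, hζ⟩ y hy
        simp only at ht hζ ⊢
        obtain ⟨h1, h2⟩ := hbr t ht ξ ζ hζ
        have k1 := S7.rpow_cmp2 (S7.br_one ξ) (S7.br_one ζ) h1 r
        have k2 := S7.rpow_cmp2 (S7.br_one (ξ + t • ζ)) (S7.br_one ζ) h2 r
        rw [abs_of_nonneg hr.1] at k1 k2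
        have g : ∀ η : S7.V d, (1 + ‖η‖) ^ r ≤ 3 ^ r * (1 + ‖ζ‖) ^ r →
            ‖a (y, η)‖ ≤ |C| * 3 ^ r * (1 + ‖ζ‖) ^ r := by
          intro η hη
          rw [mul_assoc]
          exact (hC y hy η).trans (mul_le_mul (le_abs_self C) hη
            (Real.rpow_nonneg (S7.br_pos _).le _) (abs_nonneg C))
        rw [add_mul]
        exact (norm_sub_le _ _).trans (add_le_add (g _ k1) (g _ k2))) (n + mOrder α + M)
    refine ⟨C, fun t ht ξ ζ hζ => (hvb t ξ ζ).trans ?_⟩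
    have h := hC ⟨(t, ξ, ζ), ht, hζ⟩
    simp only at h
    rw [Real.rpow_neg (S7.br_pos ζ).le, Real.rpow_natCast, ← div_eq_mul_inv,
      le_div_iff₀ (pow_pos (S7.br_pos ζ) n)]
    refine le_of_mul_le_mul_right ?_ (pow_pos (S7.br_pos ζ) M)
    refine le_trans (le_of_eq ?_) h
    rw [pow_add, pow_add]; ring
end
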